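/- Let λ ∈ ℂ. Then there exist constants C, c > 0, a potential V : ℝ² → ℂ, and a nonzero twice continuously differentiable function u : ℝ² → ℂ such that Δu + λu = V·u on ℝ², |V(x)| ≤ C·log|x|·⟨x⟩^{-1/2} for all x ∈ ℝ² with |x| ≥ 2, |V(x)| ≤ C for all x with |x| < 2, and |u(x)| ≤ C·exp(−c|x|) for all x ∈ ℝ². -/

import Mathlib

noncomputable section

/-- Partial derivative of `u` in the `i`-th coordinate direction. -/
def pd (u : EuclideanSpace ℝ (Fin 2) → ℂ) (i : Fin 2) (x : EuclideanSpace ℝ (Fin 2)) : ℂ :=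
  fderiv ℝ u x (EuclideanSpace.single i 1)

/-- Laplacian on ℝ²: sum of second partial derivatives. -/
def lap (u : EuclideanSpace ℝ (Fin 2) → ℂ) (x : EuclideanSpace ℝ (Fin 2)) : ℂ :=
  ∑ i, pd (fun y => pd u i y) i x

/-! For `k² = -λ` with `Re k > 0` the function `exp (-k ⟨z⟩)` works, with an even smaller potential.
This leaves `λ ≥ 0`, where the wave has to be forced to decay.

In the logarithmic coordinate `w = log z = t + iθ` the equation reads `Δu + λ|z|²u = |z|²Vu`, so in
terms of `s = √|z| = e^{t/2}` an error `O(s³)u` is admissible. A wave `e^{-α(t) + inθ}`, `α` real,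
satisfies it where `n² ≈ B²s⁴` and `α' ≈ κs²`, up to relative errors `O(1/s)`, with `κ² = B² - λ`;
such a wave decays like `e^{-κ|z|}`. As `n` is constant, this is possible only as long as `s` varies
by a bounded amount. So there is one wave for every block `|s - a| ≤ 1`, `a = 10, 11, …`, and two
consecutive waves are exchanged in the overlap of their blocks, where first the one and then the
other is larger.

In the overlap the two waves interfere, and `u` may be small compared with both of them. The error
must be small there too. The frequencies of consecutive waves have opposite signs, so the phase
between them turns with a frequency `N ≈ ±2Bs²`, and `|u|` is at least a constant times
`|cos (Nθ/2)|` times the size of the second wave. A modulation `E sin (Nθ)` of the phase of that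
wave shifts its frequency to `n - EN` where `cos (Nθ/2) = 0`. With the right `E = O(1/s)`, the
equation multiplies both waves by the same real factor there, so that the error is this factor
times `u` plus `cos (Nθ/2) O(s³)` times the second wave. -/

open Filter Topology Asymptotics InnerProductSpace Laplacian

/-! ### The Laplacian -/

section Laplacian

variable {E F : Type*} [NormedAddCommGroup E] [NormedSpace ℝ E]
  [NormedAddCommGroup F] [NormedSpace ℝ F]

lemma differentiableAt_fderiv_of_contDiffAt {f : E → F} {x : E} (hf : ContDiffAt ℝ 2 f x) :
    DifferentiableAt ℝ (fderiv ℝ f) x :=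
  (hf.fderiv_right (m := 1) (by norm_num)).differentiableAt one_ne_zero

lemma iteratedFDeriv_two_eq_fderiv_fderiv_apply {f : E → F} {x : E} (hf : ContDiffAt ℝ 2 f x)
    (v : E) : iteratedFDeriv ℝ 2 f x ![v, v] = fderiv ℝ (fun y ↦ fderiv ℝ f y v) x v := by
  rw [iteratedFDeriv_two_apply, fderiv_clm_apply (differentiableAt_fderiv_of_contDiffAt hf)
    (differentiableAt_const v)]
  simp

lemma lap_eq_laplacian {u : EuclideanSpace ℝ (Fin 2) → ℂ} {x : EuclideanSpace ℝ (Fin 2)}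
    (hu : ContDiffAt ℝ 2 u x) : lap u x = Δ u x := by
  rw [laplacian_eq_iteratedFDeriv_orthonormalBasis u (EuclideanSpace.basisFun (Fin 2) ℝ)]
  simp only [iteratedFDeriv_two_eq_fderiv_fderiv_apply hu, EuclideanSpace.basisFun_apply, lap, pd]

lemma laplacian_comp_linearIsometryEquiv {E₁ : Type*} [NormedAddCommGroup E₁]
    [InnerProductSpace ℝ E₁] [FiniteDimensional ℝ E₁] {E₂ : Type*} [NormedAddCommGroup E₂]
    [InnerProductSpace ℝ E₂] [FiniteDimensional ℝ E₂] (e : E₁ ≃ₗᵢ[ℝ] E₂) {f : E₂ → F}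
    (hf : ContDiff ℝ 2 f) (x : E₁) : Δ (f ∘ e) x = Δ f (e x) := by
  have hcomp (v : E₁) : iteratedFDeriv ℝ 2 (f ∘ e) x ![v, v]
      = iteratedFDeriv ℝ 2 f (e x) ![e v, e v] := by
    have h := (e.toContinuousLinearEquiv : E₁ →L[ℝ] E₂).iteratedFDeriv_comp_right hf x
      (i := 2) le_rfl
    refine (congrArg (fun m ↦ m ![v, v]) h).trans ?_
    rw [ContinuousMultilinearMap.compContinuousLinearMap_apply]
    congr 1
    ext i
    fin_cases i <;> rfl
  let b := stdOrthonormalBasis ℝ E₁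
  rw [laplacian_eq_iteratedFDeriv_orthonormalBasis (f ∘ e) b,
    laplacian_eq_iteratedFDeriv_orthonormalBasis f (b.map e)]
  simp only [hcomp, OrthonormalBasis.map_apply]

lemma bilinear_apply_mul_I (D : ℂ →L[ℝ] ℂ →L[ℝ] F) (c : ℂ) :
    D c c + D (c * Complex.I) (c * Complex.I)
      = ‖c‖ ^ 2 • (D 1 1 + D Complex.I Complex.I) := by
  have hc : c = c.re • (1 : ℂ) + c.im • Complex.I := by simp
  have hcI : c * Complex.I = c.re • Complex.I - c.im • (1 : ℂ) := by
    apply Complex.ext <;> simp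
  rw [← Complex.normSq_eq_norm_sq, Complex.normSq_apply, hcI]
  nth_rewrite 1 2 [hc]
  simp only [map_add, map_sub, map_smul, add_apply, sub_apply, smul_apply]
  module

theorem laplacian_comp_of_analyticAt {f : ℂ → F} {g : ℂ → ℂ} {w : ℂ}
    (hf : ContDiffAt ℝ 2 f (g w)) (hg : AnalyticAt ℂ g w) :
    Δ (f ∘ g) w = ‖deriv g w‖ ^ 2 • Δ f (g w) := by
  have hfg : ContDiffAt ℝ 2 (f ∘ g) w :=
    hf.comp w ((hg.contDiffAt (n := 2)).restrict_scalars ℝ)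
  have hfderiv (v : ℂ) : (fun z ↦ fderiv ℝ (f ∘ g) z v)
      =ᶠ[𝓝 w] fun z ↦ fderiv ℝ f (g z) (deriv g z * v) := by
    filter_upwards [hg.eventually_analyticAt,
      hg.continuousAt.eventually (hf.eventually (by simp))] with z hz hfz
    rw [fderiv_comp z (hfz.differentiableAt two_ne_zero)
      (hz.differentiableAt.restrictScalars ℝ),
      hz.differentiableAt.fderiv_restrictScalars ℝ]
    simp [mul_comm]
  have hsecond (v : ℂ) : iteratedFDeriv ℝ 2 (f ∘ g) w ![v, v]
      = fderiv ℝ (fderiv ℝ f) (g w) (deriv g w * v) (deriv g w * v)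
        + fderiv ℝ f (g w) (deriv (deriv g) w * v * v) := by
    have hg' : HasFDerivAt g (deriv g w • (1 : ℂ →L[ℝ] ℂ)) w := by
      simpa using hg.differentiableAt.hasDerivAt.complexToReal_fderiv
    have hg'' : HasFDerivAt (deriv g) (deriv (deriv g) w • (1 : ℂ →L[ℝ] ℂ)) w := by
      simpa using hg.deriv.differentiableAt.hasDerivAt.complexToReal_fderiv
    have h := ((differentiableAt_fderiv_of_contDiffAt hf).hasFDerivAt.comp w hg').clm_apply
      (hg''.mul_const v)
    rw [iteratedFDeriv_two_eq_fderiv_fderiv_apply hfg, (hfderiv v).fderiv_eq]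
    refine (congrArg (fun L ↦ L v) h.fderiv).trans ?_
    simp [mul_comm, add_comm]
  simp only [laplacian_eq_iteratedFDeriv_complexPlane, hsecond, mul_one, mul_assoc,
    Complex.I_mul_I, mul_neg, map_neg]
  rw [add_add_add_comm, add_neg_cancel, add_zero, bilinear_apply_mul_I]
  simp only [iteratedFDeriv_two_apply, Matrix.cons_val_zero, Matrix.cons_val_one]

lemma deriv_deriv_comp_eq_iteratedFDeriv {f : E → F} {γ : ℝ → E} {v : E} {t : ℝ}
    (hγ : ∀ s, HasDerivAt γ v s) (hf : ContDiffAt ℝ 2 f (γ t)) :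
    deriv (deriv (f ∘ γ)) t = iteratedFDeriv ℝ 2 f (γ t) ![v, v] := by
  have hderiv : deriv (f ∘ γ) =ᶠ[𝓝 t] fun s ↦ fderiv ℝ f (γ s) v := by
    filter_upwards [(hγ t).continuousAt.eventually (hf.eventually (by simp))] with s hs
    exact ((hs.differentiableAt two_ne_zero).hasFDerivAt.comp_hasDerivAt s (hγ s)).deriv
  have h := ((differentiableAt_fderiv_of_contDiffAt hf).hasFDerivAt.comp_hasDerivAt t
    (hγ t)).clm_apply (hasDerivAt_const t v)
  rw [hderiv.deriv_eq, iteratedFDeriv_two_apply]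
  simpa using h.deriv

lemma laplacian_eq_deriv_deriv_add_deriv_deriv {f : ℂ → F} {z : ℂ} (hf : ContDiffAt ℝ 2 f z) :
    Δ f z = deriv (deriv fun x : ℝ ↦ f ⟨x, z.im⟩) z.re
      + deriv (deriv fun y : ℝ ↦ f ⟨z.re, y⟩) z.im := by
  have hre (x : ℝ) : HasDerivAt (fun x : ℝ ↦ (⟨x, z.im⟩ : ℂ)) 1 x := by
    simpa [Complex.mk_eq_add_mul_I] using
      (Complex.ofRealCLM.hasDerivAt (x := x)).add_const ((z.im : ℂ) * Complex.I)
  have him (y : ℝ) : HasDerivAt (fun y : ℝ ↦ (⟨z.re, y⟩ : ℂ)) Complex.I y := by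
    simpa [Complex.mk_eq_add_mul_I] using
      ((Complex.ofRealCLM.hasDerivAt (x := y)).mul_const Complex.I).const_add (z.re : ℂ)
  simp only [laplacian_eq_iteratedFDeriv_complexPlane]
  rw [← deriv_deriv_comp_eq_iteratedFDeriv (t := z.re) hre hf,
    ← deriv_deriv_comp_eq_iteratedFDeriv (t := z.im) him hf]
  rfl

lemma deriv_deriv_mul_cexp {X X' φ φ' : ℝ → ℂ} {X'' φ'' : ℂ} {t : ℝ}
    (hX : ∀ s, HasDerivAt X (X' s) s) (hX' : HasDerivAt X' X'' t)
    (hφ : ∀ s, HasDerivAt φ (φ' s) s) (hφ' : HasDerivAt φ' φ'' t) :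
    deriv (deriv fun s ↦ X s * Complex.exp (φ s)) t
      = (X'' + 2 * X' t * φ' t + X t * (φ'' + φ' t ^ 2)) * Complex.exp (φ t) := by
  have hfirst : (deriv fun s ↦ X s * Complex.exp (φ s))
      = fun s ↦ (X' s + X s * φ' s) * Complex.exp (φ s) := by
    funext s
    refine ((hX s).mul (hφ s).cexp).deriv.trans ?_
    ring
  rw [hfirst]
  refine ((hX'.add ((hX t).mul hφ')).mul (hφ t).cexp).deriv.trans ?_
  simp only [Pi.add_apply, Pi.mul_apply]
  ring

end Laplacian

/-! ### Quasimodes and potentials -/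

/-- `u` solves `Δu + λu = Vu` on the plane `ℂ` up to an error that a potential of size
`O(⟨z⟩^{-1/2})` can absorb, and decays exponentially. The weight is written `(1 + √‖z‖)⁻¹`. -/
structure IsDecayingQuasimode (lam : ℂ) (u : ℂ → ℂ) : Prop where
  contDiff : ContDiff ℝ 2 u
  ne_zero : u ≠ 0
  exists_norm_laplacian_add_le : ∃ K : ℝ, ∀ z, ‖Δ u z + lam * u z‖ ≤ K / (1 + √‖z‖) * ‖u z‖
  exists_norm_le_exp : ∃ C c : ℝ, 0 < c ∧ ∀ z, ‖u z‖ ≤ C * Real.exp (-(c * ‖z‖))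

lemma inv_one_add_sqrt_le_rpow {r : ℝ} (hr : 0 ≤ r) :
    (1 + √r)⁻¹ ≤ √(1 + r ^ 2) ^ (-(1 / 2 : ℝ)) := by
  have hbracket : √(√(1 + r ^ 2)) ≤ 1 + √r := by
    refine Real.sqrt_le_iff.mpr ⟨by positivity, Real.sqrt_le_iff.mpr ⟨by positivity, ?_⟩⟩
    calc 1 + r ^ 2 ≤ (1 + r) ^ 2 := by linarith
      _ ≤ ((1 + √r) ^ 2) ^ 2 := by
        gcongr
        linarith [Real.sq_sqrt hr, Real.sqrt_nonneg r]
  rw [Real.rpow_neg (Real.sqrt_nonneg _), ← Real.sqrt_eq_rpow]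
  exact inv_anti₀ (by positivity) hbracket

theorem IsDecayingQuasimode.exists_potential {lam : ℂ} {u : ℂ → ℂ}
    (hu : IsDecayingQuasimode lam u) :
    ∃ (C c : ℝ) (V u : EuclideanSpace ℝ (Fin 2) → ℂ),
      0 < C ∧ 0 < c ∧ u ≠ 0 ∧ ContDiff ℝ 2 u ∧
      (∀ x, lap u x + lam * u x = V x * u x) ∧
      (∀ x, ‖V x‖ ≤ C * √(1 + ‖x‖ ^ 2) ^ (-(1 / 2 : ℝ))) ∧
      (∀ x, ‖u x‖ ≤ C * Real.exp (-(c * ‖x‖))) := by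
  obtain ⟨K, hK⟩ := hu.exists_norm_laplacian_add_le
  obtain ⟨C, c, hc, hC⟩ := hu.exists_norm_le_exp
  let e : EuclideanSpace ℝ (Fin 2) ≃ₗᵢ[ℝ] ℂ := Complex.orthonormalBasisOneI.repr.symm
  have hue : ContDiff ℝ 2 (u ∘ e) := hu.contDiff.comp e.contDiff
  have hlap (x) : lap (u ∘ e) x = Δ u (e x) := by
    rw [lap_eq_laplacian hue.contDiffAt, laplacian_comp_linearIsometryEquiv e hu.contDiff]
  refine ⟨max 1 (max K C), c, fun x ↦ (Δ u (e x) + lam * u (e x)) / u (e x), u ∘ e,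
    by positivity, hc, ?_, hue, fun x ↦ ?_, fun x ↦ ?_, fun x ↦ ?_⟩
  · obtain ⟨z, hz⟩ := Function.ne_iff.mp hu.ne_zero
    exact Function.ne_iff.mpr ⟨e.symm z, by simpa using hz⟩
  · rw [hlap]
    have h := hK (e x)
    by_cases hzero : u (e x) = 0
    · simpa [hzero] using h
    · exact (div_mul_cancel₀ _ hzero).symm
  · have hquot : ‖(Δ u (e x) + lam * u (e x)) / u (e x)‖ ≤ max 1 (max K C) * (1 + √‖x‖)⁻¹ := by
      rw [norm_div]
      refine div_le_of_le_mul₀ (norm_nonneg _) (by positivity) ((hK (e x)).trans ?_)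
      rw [e.norm_map, div_eq_mul_inv]
      gcongr
      simp
    exact hquot.trans (by gcongr; exact inv_one_add_sqrt_le_rpow (norm_nonneg x))
  · have h := hC (e x)
    rw [e.norm_map] at h
    refine h.trans ?_
    gcongr
    simp

lemma hasDerivAt_sqrt_const_add_sq {c : ℝ} (hc : 0 < c) (t : ℝ) :
    HasDerivAt (fun t : ℝ ↦ √(c + t ^ 2)) (t / √(c + t ^ 2)) t := by
  have h : HasDerivAt (fun t : ℝ ↦ c + t ^ 2) (2 * t) t := by
    simpa using (hasDerivAt_pow 2 t).const_add c
  simpa [mul_div_mul_left] using h.sqrt (by positivity)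

lemma hasDerivAt_div_sqrt_const_add_sq {c : ℝ} (hc : 0 < c) (t : ℝ) :
    HasDerivAt (fun t : ℝ ↦ t / √(c + t ^ 2)) (c / √(c + t ^ 2) ^ 3) t := by
  have hsq : √(c + t ^ 2) ^ 2 = c + t ^ 2 := Real.sq_sqrt (by positivity)
  refine ((hasDerivAt_id' t).div (hasDerivAt_sqrt_const_add_sq hc t) (by positivity)).congr_deriv ?_
  field_simp
  rw [hsq]
  ring

lemma deriv_deriv_cexp_neg_mul_sqrt {c : ℝ} (hc : 0 < c) (k : ℂ) (t : ℝ) :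
    deriv (deriv fun t : ℝ ↦ Complex.exp (-k * (√(c + t ^ 2) : ℝ))) t
      = (-k * c / (√(c + t ^ 2) : ℝ) ^ 3 + k ^ 2 * t ^ 2 / (√(c + t ^ 2) : ℝ) ^ 2)
        * Complex.exp (-k * (√(c + t ^ 2) : ℝ)) := by
  have h := deriv_deriv_mul_cexp (fun s ↦ hasDerivAt_const s (1 : ℂ)) (hasDerivAt_const t 0)
    (fun s ↦ ((hasDerivAt_sqrt_const_add_sq hc s).ofReal_comp).const_mul (-k))
    ((hasDerivAt_div_sqrt_const_add_sq hc t).ofReal_comp.const_mul (-k))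
  simp only [one_mul] at h
  rw [h]
  push_cast
  ring

lemma contDiff_sqrt_one_add_norm_sq : ContDiff ℝ 2 fun z : ℂ ↦ √(1 + ‖z‖ ^ 2) :=
  (contDiff_const.add (contDiff_norm_sq ℝ)).sqrt fun z ↦ by positivity

lemma laplacian_cexp_neg_mul_sqrt (k z : ℂ) :
    Δ (fun z : ℂ ↦ Complex.exp (-k * (√(1 + ‖z‖ ^ 2) : ℝ))) z
      = (k ^ 2 - k / (√(1 + ‖z‖ ^ 2) : ℝ) - k / (√(1 + ‖z‖ ^ 2) : ℝ) ^ 3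
        - k ^ 2 / (√(1 + ‖z‖ ^ 2) : ℝ) ^ 2) * Complex.exp (-k * (√(1 + ‖z‖ ^ 2) : ℝ)) := by
  have hC2 : ContDiff ℝ 2 fun z : ℂ ↦ Complex.exp (-k * (√(1 + ‖z‖ ^ 2) : ℝ)) :=
    (contDiff_const.mul (Complex.ofRealCLM.contDiff.comp contDiff_sqrt_one_add_norm_sq)).cexp
  have hre (x : ℝ) : 1 + ‖(⟨x, z.im⟩ : ℂ)‖ ^ 2 = (1 + z.im ^ 2) + x ^ 2 := by
    rw [← Complex.normSq_eq_norm_sq, Complex.normSq_mk]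
    ring
  have him (y : ℝ) : 1 + ‖(⟨z.re, y⟩ : ℂ)‖ ^ 2 = (1 + z.re ^ 2) + y ^ 2 := by
    rw [← Complex.normSq_eq_norm_sq, Complex.normSq_mk]
    ring
  rw [laplacian_eq_deriv_deriv_add_deriv_deriv hC2.contDiffAt]
  simp only [hre, him]
  rw [deriv_deriv_cexp_neg_mul_sqrt (by positivity), deriv_deriv_cexp_neg_mul_sqrt (by positivity),
    ← hre, ← him, Complex.eta]
  have hJ : ((√(1 + ‖z‖ ^ 2) : ℝ) : ℂ) ≠ 0 := by
    exact_mod_cast (by positivity : √(1 + ‖z‖ ^ 2) ≠ 0)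
  have hJsq : ((√(1 + ‖z‖ ^ 2) : ℝ) : ℂ) ^ 2 = 1 + (z.re : ℂ) ^ 2 + (z.im : ℂ) ^ 2 := by
    rw [← Complex.ofReal_pow, Real.sq_sqrt (by positivity), ← Complex.normSq_eq_norm_sq,
      Complex.normSq_apply]
    push_cast
    ring
  have him_sq : (z.im : ℂ) ^ 2 = ((√(1 + ‖z‖ ^ 2) : ℝ) : ℂ) ^ 2 - 1 - (z.re : ℂ) ^ 2 := by
    rw [hJsq]
    ring
  push_cast
  rw [him_sq]
  field_simp
  ring

lemma norm_neg_div_sub_le {J : ℝ} (hJ : 1 ≤ J) (k : ℂ) :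
    ‖-(k / J) - k / J ^ 3 - k ^ 2 / J ^ 2‖ ≤ (2 * ‖k‖ + ‖k‖ ^ 2) / J := by
  have hJ_inv : (J ^ 2)⁻¹ ≤ 1 := inv_le_one_of_one_le₀ (one_le_pow₀ hJ)
  have hJ_inv' : J⁻¹ ≤ 1 := inv_le_one_of_one_le₀ hJ
  calc ‖-(k / J) - k / J ^ 3 - k ^ 2 / J ^ 2‖
      ≤ ‖-(k / (J : ℂ))‖ + ‖k / (J : ℂ) ^ 3‖ + ‖k ^ 2 / (J : ℂ) ^ 2‖ :=
        norm_sub_le_of_le (norm_sub_le _ _) le_rfl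
    _ = (‖k‖ + ‖k‖ * (J ^ 2)⁻¹ + ‖k‖ ^ 2 * J⁻¹) / J := by
        simp only [norm_neg, norm_div, norm_pow, Complex.norm_of_nonneg (zero_le_one.trans hJ)]
        field_simp
    _ ≤ (‖k‖ + ‖k‖ * 1 + ‖k‖ ^ 2 * 1) / J := by gcongr
    _ = (2 * ‖k‖ + ‖k‖ ^ 2) / J := by ring

theorem isDecayingQuasimode_cexp_neg_mul_sqrt {k : ℂ} (hk : 0 < k.re) :
    IsDecayingQuasimode (-k ^ 2) fun z ↦ Complex.exp (-k * (√(1 + ‖z‖ ^ 2) : ℝ)) where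
  contDiff := (contDiff_const.mul
    (Complex.ofRealCLM.contDiff.comp contDiff_sqrt_one_add_norm_sq)).cexp
  ne_zero := Function.ne_iff.mpr ⟨0, Complex.exp_ne_zero _⟩
  exists_norm_laplacian_add_le := by
    refine ⟨2 * (2 * ‖k‖ + ‖k‖ ^ 2), fun z ↦ ?_⟩
    set J : ℝ := √(1 + ‖z‖ ^ 2) with hJ
    have hJ_one : 1 ≤ J := Real.one_le_sqrt.mpr (by nlinarith [norm_nonneg z])
    have hnorm_le : ‖z‖ ≤ J := Real.le_sqrt_of_sq_le (by linarith)
    have hweight : 1 + √‖z‖ ≤ 2 * J := by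
      have : √‖z‖ ≤ J := Real.sqrt_le_iff.mpr ⟨by positivity, by nlinarith⟩
      linarith
    rw [laplacian_cexp_neg_mul_sqrt, ← hJ, ← add_mul, norm_mul]
    gcongr
    calc ‖_‖ = ‖-(k / J) - k / J ^ 3 - k ^ 2 / J ^ 2‖ := by congr 1; ring
      _ ≤ (2 * ‖k‖ + ‖k‖ ^ 2) / J := norm_neg_div_sub_le hJ_one k
      _ ≤ _ := by
        rw [div_le_div_iff₀ (by positivity) (by positivity)]
        nlinarith [norm_nonneg k, sq_nonneg ‖k‖]
  exists_norm_le_exp := by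
    refine ⟨1, k.re, hk, fun z ↦ ?_⟩
    have hnorm_le : ‖z‖ ≤ √(1 + ‖z‖ ^ 2) := Real.le_sqrt_of_sq_le (by linarith)
    rw [Complex.norm_exp, Complex.re_mul_ofReal, Complex.neg_re, one_mul, neg_mul]
    gcongr

/-! ### The logarithmic coordinate -/

/-- The function on the punctured plane given by `W` in the logarithmic coordinate `w = log z`,
extended by `0` to the origin. -/
def ofLogCoordinate (W : ℂ → ℂ) (z : ℂ) : ℂ :=
  if z = 0 then 0 else W (Complex.log z)

/-- The operator `Δ + lam`, multiplied by `|z|²`, in the logarithmic coordinate `w = log z`. -/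
def logHelmholtz (lam : ℂ) (W : ℂ → ℂ) (w : ℂ) : ℂ :=
  Δ W w + lam * Real.exp (2 * w.re) * W w

section LogCoordinate

variable {W : ℂ → ℂ}

lemma ofLogCoordinate_exp (hper : Function.Periodic W (2 * Real.pi * Complex.I)) (w : ℂ) :
    ofLogCoordinate W (Complex.exp w) = W w := by
  obtain ⟨n, hn⟩ := Complex.exp_eq_exp_iff_exists_int.mp (Complex.exp_log (Complex.exp_ne_zero w))
  rw [ofLogCoordinate, if_neg (Complex.exp_ne_zero w), hn]
  exact hper.int_mul n w

lemma contDiffAt_ofLogCoordinate (hper : Function.Periodic W (2 * Real.pi * Complex.I))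
    (hW : ContDiff ℝ 2 W) {z : ℂ} (hz : z ≠ 0) :
    ContDiffAt ℝ 2 (ofLogCoordinate W) z := by
  let branch : ℂ → ℂ := fun y ↦ Complex.log (y / z) + Complex.log z
  have hbranch : AnalyticAt ℂ branch z :=
    ((analyticAt_id.div_const).clog (by simp [hz])).add analyticAt_const
  have heq : ofLogCoordinate W =ᶠ[𝓝 z] W ∘ branch := by
    filter_upwards [isOpen_ne.mem_nhds hz] with y hy
    have hexp : Complex.exp (branch y) = y := by
      rw [Complex.exp_add, Complex.exp_log (div_ne_zero hy hz), Complex.exp_log hz,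
        div_mul_cancel₀ y hz]
    rw [Function.comp_apply, ← ofLogCoordinate_exp hper, hexp]
  exact (hW.contDiffAt.comp z (hbranch.contDiffAt.restrict_scalars ℝ)).congr_of_eventuallyEq heq

lemma laplacian_eq_norm_exp_sq_smul_laplacian_ofLogCoordinate
    (hper : Function.Periodic W (2 * Real.pi * Complex.I)) (hW : ContDiff ℝ 2 W) (w : ℂ) :
    Δ W w = ‖Complex.exp w‖ ^ 2 • Δ (ofLogCoordinate W) (Complex.exp w) := by
  have hcomp : ofLogCoordinate W ∘ Complex.exp = W := funext (ofLogCoordinate_exp hper)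
  have h := laplacian_comp_of_analyticAt
    (contDiffAt_ofLogCoordinate hper hW (Complex.exp_ne_zero w)) (g := Complex.exp) (w := w)
    (by fun_prop)
  rwa [hcomp, Complex.deriv_exp] at h

lemma logHelmholtz_congr {W' : ℂ → ℂ} {w : ℂ} (h : W =ᶠ[𝓝 w] W') (lam : ℂ) :
    logHelmholtz lam W w = logHelmholtz lam W' w := by
  rw [logHelmholtz, logHelmholtz, (laplacian_congr_nhds h).eq_of_nhds, h.eq_of_nhds]

lemma logHelmholtz_add {W' : ℂ → ℂ} {w : ℂ} (hW : ContDiffAt ℝ 2 W w) (hW' : ContDiffAt ℝ 2 W' w)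
    (lam : ℂ) :
    logHelmholtz lam (W + W') w = logHelmholtz lam W w + logHelmholtz lam W' w := by
  rw [logHelmholtz, logHelmholtz, logHelmholtz, hW.laplacian_add hW', Pi.add_apply]
  ring

lemma ofLogCoordinate_eventuallyEq_pow {m : ℕ} {T : ℝ} (hm : m ≠ 0)
    (hW : ∀ w, w.re < T → W w = Complex.exp (m * w)) :
    ofLogCoordinate W =ᶠ[𝓝 0] fun z ↦ z ^ m := by
  filter_upwards [Metric.ball_mem_nhds (0 : ℂ) (Real.exp_pos T)] with z hz
  by_cases h0 : z = 0
  · simp [ofLogCoordinate, h0, hm]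
  · have hre : (Complex.log z).re < T := by
      rw [Complex.log_re, Real.log_lt_iff_lt_exp (norm_pos_iff.mpr h0)]
      simpa using hz
    rw [ofLogCoordinate, if_neg h0, hW _ hre, Complex.exp_nat_mul, Complex.exp_log h0]

lemma exp_mul_norm_laplacian_ofLogCoordinate_add
    (hper : Function.Periodic W (2 * Real.pi * Complex.I))
    (hW : ContDiff ℝ 2 W) (lam w : ℂ) :
    Real.exp (2 * w.re) * ‖Δ (ofLogCoordinate W) (Complex.exp w)
        + lam * ofLogCoordinate W (Complex.exp w)‖
      = ‖logHelmholtz lam W w‖ := by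
  have hsq : ‖Complex.exp w‖ ^ 2 = Real.exp (2 * w.re) := by
    rw [Complex.norm_exp, ← Real.exp_nat_mul, Nat.cast_ofNat]
  rw [logHelmholtz, laplacian_eq_norm_exp_sq_smul_laplacian_ofLogCoordinate hper hW, hsq,
    ofLogCoordinate_exp hper, Complex.real_smul, mul_assoc, mul_left_comm lam, ← mul_add, norm_mul,
    Complex.norm_of_nonneg (Real.exp_pos _).le]

theorem isDecayingQuasimode_ofLogCoordinate
    (hper : Function.Periodic W (2 * Real.pi * Complex.I))
    {lam : ℂ} {m : ℕ} {T K C c : ℝ} (hm : m ≠ 0)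
    (hc : 0 < c) (hW : ContDiff ℝ 2 W) (hinner : ∀ w, w.re < T → W w = Complex.exp (m * w))
    (hΔ : ∀ w, ‖logHelmholtz lam W w‖
      ≤ K * Real.exp (2 * w.re) / (1 + Real.exp (w.re / 2)) * ‖W w‖)
    (hdecay : ∀ w, ‖W w‖ ≤ C * Real.exp (-(c * Real.exp w.re))) :
    IsDecayingQuasimode lam (ofLogCoordinate W) := by
  have hpow := ofLogCoordinate_eventuallyEq_pow hm hinner
  have hzero : ofLogCoordinate W 0 = 0 := if_pos rfl
  have hlap_zero : Δ (ofLogCoordinate W) 0 = 0 := by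
    have hanalytic : AnalyticAt ℂ (fun z : ℂ ↦ z ^ m) 0 := by fun_prop
    rw [(laplacian_congr_nhds hpow).eq_of_nhds]
    exact hanalytic.harmonicAt.2.eq_of_nhds
  refine ⟨contDiff_iff_contDiffAt.mpr fun z ↦ ?_, ?_, ⟨K, fun z ↦ ?_⟩, C, c, hc, fun z ↦ ?_⟩
  · rcases eq_or_ne z 0 with rfl | hz
    · exact (contDiff_id.pow m).contDiffAt.congr_of_eventuallyEq hpow
    · exact contDiffAt_ofLogCoordinate hper hW hz
  · refine Function.ne_iff.mpr ⟨Complex.exp ((T - 1 : ℝ) : ℂ), ?_⟩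
    rw [ofLogCoordinate_exp hper, hinner _ (by simp)]
    exact Complex.exp_ne_zero _
  · rcases eq_or_ne z 0 with rfl | hz
    · simp [hlap_zero, hzero]
    · obtain ⟨w, rfl⟩ : ∃ w, Complex.exp w = z := ⟨_, Complex.exp_log hz⟩
      refine le_of_mul_le_mul_left ?_ (Real.exp_pos (2 * w.re))
      rw [exp_mul_norm_laplacian_ofLogCoordinate_add hper hW, ofLogCoordinate_exp hper,
        Complex.norm_exp, ← Real.exp_half]
      exact (hΔ w).trans_eq (by ring)
  · rcases eq_or_ne z 0 with rfl | hz
    · have hC : 0 ≤ C := nonneg_of_mul_nonneg_left ((norm_nonneg _).trans (hdecay 0))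
        (Real.exp_pos _)
      rw [hzero, norm_zero]
      positivity
    · obtain ⟨w, rfl⟩ : ∃ w, Complex.exp w = z := ⟨_, Complex.exp_log hz⟩
      rw [ofLogCoordinate_exp hper, Complex.norm_exp]
      exact hdecay w

end LogCoordinate

/-! ### Symbols in the radial scale -/

/-- The radial scale `s = √|z|` as a function of the logarithmic coordinate `t = log |z|`. -/
def scale (t : ℝ) : ℝ := Real.exp (t / 2)

/-- The value of the radial scale at the centre of block `i`. It starts at `10`, so that all
radii which occur are bounded away from `0`. -/
def node (i : ℕ) : ℝ := i + 10

/-- The value of `t` at the centre of block `i`. -/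
def logNode (i : ℕ) : ℝ := 2 * Real.log (node i)

/-- The filter of pairs of a block and a point of it (in the coordinate `w = log z`), the block
`i` being the annulus `|s - node i| ≤ 1`. An estimate along it is uniform in the block. -/
def blocks : Filter (ℕ × ℂ) := 𝓟 {p | |scale p.2.re - node p.1| ≤ 1}

/-- Being `O(s ^ m)`, uniformly on all blocks. -/
def HasOrder (m : ℤ) (f : ℕ × ℂ → ℝ) : Prop := f =O[blocks] fun p ↦ scale p.2.re ^ m

lemma scale_pos (t : ℝ) : 0 < scale t := Real.exp_pos _

lemma scale_sq (t : ℝ) : scale t ^ 2 = Real.exp t := by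
  rw [scale, ← Real.exp_nat_mul]
  congr 1
  ring

lemma scale_pow_four (t : ℝ) : scale t ^ 4 = Real.exp (2 * t) := by
  rw [scale, ← Real.exp_nat_mul]
  congr 1
  ring

lemma two_mul_log_scale (t : ℝ) : 2 * Real.log (scale t) = t := by
  rw [scale, Real.log_exp]
  ring

lemma ten_le_node (i : ℕ) : 10 ≤ node i := by simp [node]

lemma node_pos (i : ℕ) : 0 < node i := by linarith [ten_le_node i]

lemma node_succ (j : ℕ) : node (j + 1) = node j + 1 := by
  simp only [node]
  push_cast
  ring

lemma contDiff_scale : ContDiff ℝ 2 scale := (contDiff_id.div_const 2).exp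

lemma hasDerivAt_scale (t : ℝ) : HasDerivAt scale (scale t / 2) t :=
  ((hasDerivAt_id' t).div_const 2).exp.congr_deriv (by simp only [scale]; ring)

lemma scale_bounds {i : ℕ} {t : ℝ} (h : |scale t - node i| ≤ 1) :
    9 ≤ scale t ∧ node i ≤ 2 * scale t ∧ scale t ≤ 2 * node i := by
  have := ten_le_node i
  obtain ⟨h₁, h₂⟩ := abs_le.mp h
  exact ⟨by linarith, by linarith, by linarith⟩

lemma hasDerivAt_deriv_of_contDiff_two {f : ℝ → ℝ} (hf : ContDiff ℝ 2 f) (t : ℝ) :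
    HasDerivAt f (deriv f t) t :=
  (hf.differentiable two_ne_zero t).hasDerivAt

lemma hasDerivAt_deriv_deriv_of_contDiff_two {f : ℝ → ℝ} (hf : ContDiff ℝ 2 f) (t : ℝ) :
    HasDerivAt (deriv f) (deriv (deriv f) t) t :=
  ((hf.deriv' (n := 1)).differentiable one_ne_zero t).hasDerivAt

namespace HasOrder

variable {m n : ℤ} {f g : ℕ × ℂ → ℝ}

lemma of_le {K : ℝ}
    (h : ∀ i w, |scale w.re - node i| ≤ 1 → |f (i, w)| ≤ K * scale w.re ^ m) : HasOrder m f :=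
  isBigO_principal.mpr ⟨K, fun p hp ↦
    (h p.1 p.2 hp).trans_eq (by rw [Real.norm_of_nonneg (zpow_nonneg (scale_pos _).le _)])⟩

lemma exists_le (hf : HasOrder m f) :
    ∃ K, 0 ≤ K ∧ ∀ i w, |scale w.re - node i| ≤ 1 → |f (i, w)| ≤ K * scale w.re ^ m := by
  obtain ⟨K, hK₀, hK⟩ := hf.exists_nonneg
  refine ⟨K, hK₀, fun i w hw ↦ ?_⟩
  have h := isBigOWith_principal.mp hK (i, w) hw
  rwa [Real.norm_of_nonneg (zpow_nonneg (scale_pos _).le _)] at h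

lemma mono (hf : HasOrder m f) (h : m ≤ n) : HasOrder n f :=
  IsBigO.trans hf <| isBigO_principal.mpr ⟨1, fun p hp ↦ by
    have h9 := (scale_bounds hp).1
    rw [one_mul, Real.norm_of_nonneg (zpow_nonneg (scale_pos _).le _),
      Real.norm_of_nonneg (zpow_nonneg (scale_pos _).le _)]
    exact zpow_le_zpow_right₀ (by linarith) h⟩

lemma zero : HasOrder m fun _ ↦ 0 := isBigO_zero _ _

lemma const (c : ℝ) : HasOrder 0 fun _ ↦ c :=
  of_le (K := |c|) fun i w _ ↦ by simp

lemma of_scale : HasOrder 1 fun p ↦ scale p.2.re :=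
  of_le (K := 1) fun i w _ ↦ by simp [abs_of_pos (scale_pos w.re)]

lemma of_node : HasOrder 1 fun p ↦ node p.1 :=
  of_le (K := 2) fun i w hw ↦ by
    rw [abs_of_pos (node_pos i), zpow_one]
    exact (scale_bounds hw).2.1

lemma add (hf : HasOrder m f) (hg : HasOrder m g) : HasOrder m fun p ↦ f p + g p :=
  IsBigO.add hf hg

lemma sub (hf : HasOrder m f) (hg : HasOrder m g) : HasOrder m fun p ↦ f p - g p :=
  IsBigO.sub hf hg

lemma const_mul (hf : HasOrder m f) (c : ℝ) : HasOrder m fun p ↦ c * f p :=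
  IsBigO.const_mul_left hf c

lemma abs (hf : HasOrder m f) : HasOrder m fun p ↦ |f p| := isBigO_abs_left.mpr hf

lemma mul (hf : HasOrder m f) (hg : HasOrder n g) : HasOrder (m + n) fun p ↦ f p * g p :=
  (IsBigO.mul hf hg).congr_right fun _ ↦ (zpow_add₀ (scale_pos _).ne' m n).symm

lemma sin_mul_im (N : ℕ → ℝ) : HasOrder 0 fun p ↦ Real.sin (N p.1 * p.2.im) :=
  of_le (K := 1) fun i w _ ↦ by simpa using Real.abs_sin_le_one _

lemma cos_mul_im (N : ℕ → ℝ) : HasOrder 0 fun p ↦ Real.cos (N p.1 * p.2.im) :=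
  of_le (K := 1) fun i w _ ↦ by simpa using Real.abs_cos_le_one _

lemma comp_scale_sub_node {h : ℝ → ℝ} (hh : Continuous h) :
    HasOrder 0 fun p ↦ h (scale p.2.re - node p.1) := by
  obtain ⟨K, hK⟩ := isCompact_Icc.exists_bound_of_continuousOn (s := Set.Icc (-1) 1)
    hh.continuousOn
  exact of_le (K := K) fun i w hw ↦ by simpa using hK _ (abs_le.mp hw)

lemma node_sq_sub_scale_sq : HasOrder 1 fun p ↦ node p.1 ^ 2 - scale p.2.re ^ 2 := by
  have hsub : HasOrder 0 fun p ↦ scale p.2.re - node p.1 := comp_scale_sub_node continuous_id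
  refine ((hsub.const_mul (-1)).mul (of_node.add of_scale)).congr_left fun p ↦ ?_
  ring

lemma sq_sub_sq {c : ℝ} (hf : HasOrder 1 fun p ↦ f p - c * scale p.2.re ^ 2) :
    HasOrder 3 fun p ↦ f p ^ 2 - c ^ 2 * scale p.2.re ^ 4 := by
  have hscale : HasOrder 2 fun p ↦ 2 * c * (scale p.2.re * scale p.2.re) :=
    (of_scale.mul of_scale).const_mul _
  refine (hf.mul ((hf.mono one_le_two).add hscale)).congr_left fun p ↦ ?_
  ring

lemma of_sub_mul_scale_sq {c : ℝ} (hf : HasOrder 1 fun p ↦ f p - c * scale p.2.re ^ 2) :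
    HasOrder 2 f := by
  have hscale : HasOrder 2 fun p ↦ c * (scale p.2.re * scale p.2.re) :=
    (of_scale.mul of_scale).const_mul _
  refine ((hf.mono one_le_two).add hscale).congr_left fun p ↦ ?_
  ring

lemma congr_succ {a b : ℕ → ℝ} (ha : HasOrder m fun p ↦ a p.1) (hm : 0 ≤ m)
    (h : ∀ i, b (i + 1) = a (i + 1)) : HasOrder m fun p ↦ b p.1 := by
  have hsub : HasOrder 0 fun p ↦ b p.1 - a p.1 := of_le (K := |b 0 - a 0|) fun i w _ ↦ by
    cases i with
    | zero => simp
    | succ i => simp [h]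
  simpa using (hsub.mono hm).add ha

lemma sub_logNode : HasOrder (-1) fun p ↦ p.2.re - logNode p.1 := by
  refine of_le (K := 4) fun i w hw ↦ ?_
  obtain ⟨h₁, h₂⟩ := abs_le.mp hw
  have hs := scale_pos w.re
  have ha := node_pos i
  have hupper : Real.log (scale w.re / node i) ≤ 2 / scale w.re := by
    refine (Real.log_le_sub_one_of_pos (div_pos hs ha)).trans ?_
    rw [div_sub_one ha.ne', div_le_div_iff₀ ha hs]
    nlinarith [(scale_bounds hw).2.2]
  have hlower : Real.log (node i / scale w.re) ≤ 2 / scale w.re := by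
    refine (Real.log_le_sub_one_of_pos (div_pos ha hs)).trans ?_
    rw [div_sub_one hs.ne']
    gcongr
    linarith
  rw [Real.log_div hs.ne' ha.ne'] at hupper
  rw [Real.log_div ha.ne' hs.ne'] at hlower
  rw [logNode, zpow_neg_one, ← two_mul_log_scale w.re, two_mul_log_scale, abs_le]
  constructor <;> linarith [two_mul_log_scale w.re, div_eq_mul_inv 2 (scale w.re)]

end HasOrder

/-- A family of functions of `t = log |z|`, one for each block, of order `m` in the scale `s`
uniformly on the blocks, where each derivative costs one further power of `s` (the blocks have
length comparable to `1 / s` in `t`). -/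
structure IsSymbol (m : ℤ) (f : ℕ → ℝ → ℝ) : Prop where
  contDiff : ∀ i, ContDiff ℝ 2 (f i)
  hasOrder : HasOrder m fun p ↦ f p.1 p.2.re
  hasOrder_deriv : HasOrder (m + 1) fun p ↦ deriv (f p.1) p.2.re
  hasOrder_deriv_deriv : HasOrder (m + 2) fun p ↦ deriv (deriv (f p.1)) p.2.re

namespace IsSymbol

variable {m n : ℤ} {f g : ℕ → ℝ → ℝ}

lemma of_const {a : ℕ → ℝ} (ha : HasOrder m fun p ↦ a p.1) : IsSymbol m fun i _ ↦ a i where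
  contDiff _ := contDiff_const
  hasOrder := ha
  hasOrder_deriv := by simpa using HasOrder.zero
  hasOrder_deriv_deriv := by simpa using HasOrder.zero

lemma one_sub (hf : IsSymbol 0 f) : IsSymbol 0 fun i t ↦ 1 - f i t where
  contDiff i := contDiff_const.sub (hf.contDiff i)
  hasOrder := (HasOrder.const 1).sub hf.hasOrder
  hasOrder_deriv := by simpa using hf.hasOrder_deriv.const_mul (-1)
  hasOrder_deriv_deriv := by simpa [deriv_const_sub] using hf.hasOrder_deriv_deriv.const_mul (-1)

lemma mul (hf : IsSymbol m f) (hg : IsSymbol n g) : IsSymbol (m + n) fun i t ↦ f i t * g i t := by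
  have hasDerivAt_f (i t) := hasDerivAt_deriv_of_contDiff_two (hf.contDiff i) t
  have hasDerivAt_g (i t) := hasDerivAt_deriv_of_contDiff_two (hg.contDiff i) t
  have hderiv (i : ℕ) : (deriv fun t ↦ f i t * g i t)
      = fun t ↦ deriv (f i) t * g i t + f i t * deriv (g i) t :=
    funext fun t ↦ ((hasDerivAt_f i t).mul (hasDerivAt_g i t)).deriv
  have hderiv_deriv (i : ℕ) (t : ℝ) : deriv (deriv fun t ↦ f i t * g i t) t
      = deriv (deriv (f i)) t * g i t + deriv (f i) t * deriv (g i) t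
        + (deriv (f i) t * deriv (g i) t + f i t * deriv (deriv (g i)) t) := by
    rw [hderiv]
    exact (((hasDerivAt_deriv_deriv_of_contDiff_two (hf.contDiff i) t).mul (hasDerivAt_g i t)).add
      ((hasDerivAt_f i t).mul (hasDerivAt_deriv_deriv_of_contDiff_two (hg.contDiff i) t))).deriv
  refine ⟨fun i ↦ (hf.contDiff i).mul (hg.contDiff i), hf.hasOrder.mul hg.hasOrder, ?_, ?_⟩
  · simp only [hderiv]
    exact ((hf.hasOrder_deriv.mul hg.hasOrder).mono (by linarith)).add
      ((hf.hasOrder.mul hg.hasOrder_deriv).mono (by linarith))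
  · simp only [hderiv_deriv]
    have hcross : HasOrder (m + n + 2) fun p ↦ deriv (f p.1) p.2.re * deriv (g p.1) p.2.re :=
      (hf.hasOrder_deriv.mul hg.hasOrder_deriv).mono (by linarith)
    exact (((hf.hasOrder_deriv_deriv.mul hg.hasOrder).mono (by linarith)).add hcross).add
      (hcross.add ((hf.hasOrder.mul hg.hasOrder_deriv_deriv).mono (by linarith)))

lemma comp_scale_sub_node {h : ℝ → ℝ} (hh : ContDiff ℝ 2 h) :
    IsSymbol 0 fun i t ↦ h (scale t - node i) := by
  have hinner (i : ℕ) (t : ℝ) : HasDerivAt (fun t ↦ scale t - node i) (scale t / 2) t :=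
    (hasDerivAt_scale t).sub_const (node i)
  have hderiv (i : ℕ) : (deriv fun t ↦ h (scale t - node i))
      = fun t ↦ deriv h (scale t - node i) * (scale t / 2) :=
    funext fun t ↦ ((hasDerivAt_deriv_of_contDiff_two hh _).comp t (hinner i t)).deriv
  have hderiv_deriv (i : ℕ) (t : ℝ) : deriv (deriv fun t ↦ h (scale t - node i)) t
      = deriv (deriv h) (scale t - node i) * (scale t / 2) * (scale t / 2)
        + deriv h (scale t - node i) * (scale t / 2 / 2) := by
    rw [hderiv]
    exact (((hasDerivAt_deriv_deriv_of_contDiff_two hh _).comp t (hinner i t)).mul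
      ((hasDerivAt_scale t).div_const 2)).deriv
  have hcont : ContDiff ℝ 1 (deriv h) := hh.deriv' (n := 1)
  have hh' := HasOrder.comp_scale_sub_node hcont.continuous
  have hh'' := HasOrder.comp_scale_sub_node (hcont.continuous_deriv le_rfl)
  have hhalf : HasOrder 1 fun p ↦ scale p.2.re / 2 := by
    simpa [div_eq_inv_mul] using HasOrder.of_scale.const_mul 2⁻¹
  have hquarter : HasOrder 1 fun p ↦ scale p.2.re / 2 / 2 := by
    simpa [div_eq_inv_mul] using hhalf.const_mul 2⁻¹
  refine ⟨fun i ↦ hh.comp (contDiff_scale.sub contDiff_const),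
    HasOrder.comp_scale_sub_node hh.continuous, ?_, ?_⟩
  · simpa only [hderiv] using hh'.mul hhalf
  · simp only [hderiv_deriv]
    exact ((hh''.mul hhalf).mul hhalf).add ((hh'.mul hquarter).mono (by norm_num))

lemma sub_logNode : IsSymbol (-1) fun i t ↦ t - logNode i where
  contDiff i := contDiff_id.sub contDiff_const
  hasOrder := HasOrder.sub_logNode
  hasOrder_deriv := by simpa using HasOrder.const 1
  hasOrder_deriv_deriv := by simpa using HasOrder.zero

end IsSymbol

/-! ### Waves -/

/-- The wave `X(t) e^{-α(t)} e^{i (n θ + E(t) sin (N θ))}` in the logarithmic coordinate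
`w = t + iθ`: amplitude `X`, decay exponent `α`, angular frequency `n`, and a modulation
of the phase of depth `E` and frequency `N`. -/
def wave (X α E : ℝ → ℝ) (n N : ℝ) (w : ℂ) : ℂ :=
  X w.re * Complex.exp ((-α w.re : ℝ) + (n * w.im + E w.re * Real.sin (N * w.im) : ℝ) * Complex.I)

section Wave

variable {X α E : ℝ → ℝ} {n N : ℝ}

lemma norm_exp_add_mul_I (a b : ℝ) : ‖Complex.exp (a + b * Complex.I)‖ = Real.exp a := by
  rw [Complex.norm_exp, Complex.add_re, Complex.ofReal_re, Complex.re_ofReal_mul, Complex.I_re,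
    mul_zero, add_zero]

lemma norm_wave (w : ℂ) : ‖wave X α E n N w‖ = |X w.re| * Real.exp (-α w.re) := by
  rw [wave, norm_mul, Complex.norm_real, Real.norm_eq_abs, norm_exp_add_mul_I]

lemma contDiff_wave (hX : ContDiff ℝ 2 X) (hα : ContDiff ℝ 2 α) (hE : ContDiff ℝ 2 E) :
    ContDiff ℝ 2 (wave X α E n N) := by
  have hre : ContDiff ℝ 2 Complex.re := Complex.reCLM.contDiff
  have him : ContDiff ℝ 2 Complex.im := Complex.imCLM.contDiff
  have hphase : ContDiff ℝ 2 fun w : ℂ ↦ n * w.im + E w.re * Real.sin (N * w.im) :=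
    (contDiff_const.mul him).add ((hE.comp hre).mul (contDiff_const.mul him).sin)
  have hofReal {f : ℂ → ℝ} (hf : ContDiff ℝ 2 f) : ContDiff ℝ 2 fun w ↦ (f w : ℂ) :=
    Complex.ofRealCLM.contDiff.comp hf
  exact (hofReal (hX.comp hre)).mul
    ((hofReal (hα.comp hre).neg).add ((hofReal hphase).mul contDiff_const)).cexp

lemma periodic_wave {a b : ℤ} : Function.Periodic (wave X α E a b) (2 * Real.pi * Complex.I) := by
  intro w
  have hre : (w + 2 * Real.pi * Complex.I).re = w.re := by simp
  have him : (w + 2 * Real.pi * Complex.I).im = w.im + 2 * Real.pi := by simp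
  have hsin : Real.sin (b * (w.im + 2 * Real.pi)) = Real.sin (b * w.im) := by
    rw [mul_add, Real.sin_add_int_mul_two_pi]
  rw [wave, wave, hre, him, hsin]
  congr 1
  refine Complex.exp_eq_exp_iff_exists_int.mpr ⟨a, ?_⟩
  push_cast
  ring

lemma deriv_deriv_wave_re (hX : ContDiff ℝ 2 X) (hα : ContDiff ℝ 2 α) (hE : ContDiff ℝ 2 E)
    (w : ℂ) :
    deriv (deriv fun t : ℝ ↦ wave X α E n N ⟨t, w.im⟩) w.re
      = (deriv (deriv X) w.re
          + 2 * deriv X w.re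
            * (-deriv α w.re + (deriv E w.re * Real.sin (N * w.im) : ℝ) * Complex.I)
          + X w.re * (-deriv (deriv α) w.re
            + (deriv (deriv E) w.re * Real.sin (N * w.im) : ℝ) * Complex.I
            + (-deriv α w.re + (deriv E w.re * Real.sin (N * w.im) : ℝ) * Complex.I) ^ 2))
        * Complex.exp ((-α w.re : ℝ)
            + (n * w.im + E w.re * Real.sin (N * w.im) : ℝ) * Complex.I) := by
  have hexponent {f f' g g' : ℝ → ℝ} {t : ℝ} (hf : HasDerivAt f (f' t) t)
      (hg : HasDerivAt g (g' t) t) (c : ℝ) :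
      HasDerivAt (fun s ↦ ((-f s : ℝ) + (c + g s * Real.sin (N * w.im) : ℝ) * Complex.I : ℂ))
        ((-f' t : ℝ) + (0 + g' t * Real.sin (N * w.im) : ℝ) * Complex.I) t :=
    hf.fun_neg.ofReal_comp.add
      (((hg.mul_const _).const_add c).congr_deriv (zero_add _).symm |>.ofReal_comp.mul_const _)
  simp only [wave]
  rw [deriv_deriv_mul_cexp (fun s ↦ (hasDerivAt_deriv_of_contDiff_two hX s).ofReal_comp)
    (hasDerivAt_deriv_deriv_of_contDiff_two hX w.re).ofReal_comp
    (fun s ↦ hexponent (hasDerivAt_deriv_of_contDiff_two hα s)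
      (hasDerivAt_deriv_of_contDiff_two hE s) (n * w.im))
    (hexponent (hasDerivAt_deriv_deriv_of_contDiff_two hα w.re)
      (hasDerivAt_deriv_deriv_of_contDiff_two hE w.re) 0)]
  simp only [zero_add, Complex.ofReal_neg]

lemma deriv_deriv_wave_im (w : ℂ) :
    deriv (deriv fun θ : ℝ ↦ wave X α E n N ⟨w.re, θ⟩) w.im
      = X w.re * ((-(E w.re * N ^ 2 * Real.sin (N * w.im)) : ℝ) * Complex.I
            - (n + E w.re * N * Real.cos (N * w.im) : ℝ) ^ 2)
        * Complex.exp ((-α w.re : ℝ)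
            + (n * w.im + E w.re * Real.sin (N * w.im) : ℝ) * Complex.I) := by
  have hsin (θ : ℝ) : HasDerivAt (fun θ ↦ Real.sin (N * θ)) (Real.cos (N * θ) * N) θ := by
    simpa using (hasDerivAt_id' θ).const_mul N |>.sin
  have hcos (θ : ℝ) : HasDerivAt (fun θ ↦ Real.cos (N * θ)) (-Real.sin (N * θ) * N) θ := by
    simpa using (hasDerivAt_id' θ).const_mul N |>.cos
  have hphase (θ : ℝ) : HasDerivAt (fun θ ↦ n * θ + E w.re * Real.sin (N * θ))
      (n + E w.re * N * Real.cos (N * θ)) θ :=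
    (((hasDerivAt_id' θ).const_mul n).add ((hsin θ).const_mul (E w.re))).congr_deriv (by ring)
  have hphase' (θ : ℝ) : HasDerivAt (fun θ ↦ n + E w.re * N * Real.cos (N * θ))
      (-(E w.re * N ^ 2 * Real.sin (N * θ))) θ :=
    (((hcos θ).const_mul (E w.re * N)).const_add n).congr_deriv (by ring)
  simp only [wave]
  rw [deriv_deriv_mul_cexp (fun s ↦ hasDerivAt_const s _) (hasDerivAt_const w.im 0)
    (fun θ ↦ ((hphase θ).ofReal_comp.mul_const Complex.I).const_add _)
    ((hphase' w.im).ofReal_comp.mul_const Complex.I), mul_pow, Complex.I_sq]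
  ring

/-- The real part of the factor by which `logHelmholtz` multiplies the exponential of a wave. -/
def waveResidualRe (lam : ℝ) (X α E : ℝ → ℝ) (n N : ℝ) (w : ℂ) : ℝ :=
  deriv (deriv X) w.re - 2 * (deriv X w.re * deriv α w.re)
    + X w.re * ((deriv α w.re ^ 2 - n ^ 2 + lam * Real.exp (2 * w.re)) - deriv (deriv α) w.re
      - (deriv E w.re * Real.sin (N * w.im)) ^ 2
      - 2 * n * (E w.re * N * Real.cos (N * w.im)) - (E w.re * N * Real.cos (N * w.im)) ^ 2)

/-- The imaginary part of the factor by which `logHelmholtz` multiplies the exponential of a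
wave. -/
def waveResidualIm (X α E : ℝ → ℝ) (N : ℝ) (w : ℂ) : ℝ :=
  2 * (deriv X w.re * (deriv E w.re * Real.sin (N * w.im)))
    + X w.re * (deriv (deriv E) w.re * Real.sin (N * w.im)
      - 2 * (deriv α w.re * (deriv E w.re * Real.sin (N * w.im)))
      - E w.re * N * N * Real.sin (N * w.im))

lemma logHelmholtz_wave (hX : ContDiff ℝ 2 X) (hα : ContDiff ℝ 2 α) (hE : ContDiff ℝ 2 E)
    (lam : ℝ) (w : ℂ) :
    logHelmholtz lam (wave X α E n N) w
      = (waveResidualRe lam X α E n N w + waveResidualIm X α E N w * Complex.I)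
        * Complex.exp ((-α w.re : ℝ)
            + (n * w.im + E w.re * Real.sin (N * w.im) : ℝ) * Complex.I) := by
  rw [logHelmholtz, laplacian_eq_deriv_deriv_add_deriv_deriv (contDiff_wave hX hα hE).contDiffAt,
    deriv_deriv_wave_re hX hα hE, deriv_deriv_wave_im, wave, waveResidualRe, waveResidualIm]
  push_cast
  ring_nf
  simp only [Complex.I_sq]
  ring

end Wave

section WaveFamily

variable {lam B κ : ℝ} {X α E : ℕ → ℝ → ℝ} {n N : ℕ → ℝ}

/-- A family of waves, one for each block, whose decay rate is `κ s² + O(s)` and whose angular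
frequency has size `B s² + O(s)` on its block. -/
structure IsWaveFamily (κ B : ℝ) (X α E : ℕ → ℝ → ℝ) (n N : ℕ → ℝ) : Prop where
  amplitude : IsSymbol 0 X
  contDiff_decay : ∀ i, ContDiff ℝ 2 (α i)
  deriv_decay : HasOrder 1 fun p ↦ deriv (α p.1) p.2.re - κ * scale p.2.re ^ 2
  deriv_deriv_decay : HasOrder 2 fun p ↦ deriv (deriv (α p.1)) p.2.re
  depth : IsSymbol (-1) E
  abs_freq : HasOrder 1 fun p ↦ |n p.1| - B * scale p.2.re ^ 2
  modFreq : HasOrder 2 fun p ↦ N p.1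

namespace IsWaveFamily

lemma hasOrder_freq (h : IsWaveFamily κ B X α E n N) : HasOrder 2 fun p ↦ n p.1 :=
  (isBigO_abs_left.mp h.abs_freq.of_sub_mul_scale_sq :)

lemma hasOrder_principal (h : IsWaveFamily κ B X α E n N) (hκ : κ ^ 2 = B ^ 2 - lam) :
    HasOrder 3 fun p ↦
      deriv (α p.1) p.2.re ^ 2 - n p.1 ^ 2 + lam * Real.exp (2 * p.2.re) := by
  refine (h.deriv_decay.sq_sub_sq.sub h.abs_freq.sq_sub_sq).congr_left fun p ↦ ?_
  rw [sq_abs, ← scale_pow_four, hκ]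
  ring

lemma hasOrder_waveResidualRe (h : IsWaveFamily κ B X α E n N) (hκ : κ ^ 2 = B ^ 2 - lam) :
    HasOrder 3 fun p ↦ waveResidualRe lam (X p.1) (α p.1) (E p.1) (n p.1) (N p.1) p.2 := by
  have hX'α' := h.amplitude.hasOrder_deriv.mul h.deriv_decay.of_sub_mul_scale_sq
  have hE' := h.depth.hasOrder_deriv.mul (.sin_mul_im N)
  have hENcos := (h.depth.hasOrder.mul h.modFreq).mul (.cos_mul_im N)
  have hnENcos := h.hasOrder_freq.mul hENcos
  refine ((h.amplitude.hasOrder_deriv_deriv.mono (by norm_num)).sub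
    (hX'α'.const_mul 2)).add (h.amplitude.hasOrder.mul (((((h.hasOrder_principal hκ).sub
      (h.deriv_deriv_decay.mono (by norm_num))).sub ((hE'.mul hE').mono (by norm_num))).sub
      (hnENcos.const_mul 2)).sub ((hENcos.mul hENcos).mono (by norm_num)))) |>.congr_left
    fun p ↦ ?_
  rw [waveResidualRe]
  ring

lemma hasOrder_waveResidualIm (h : IsWaveFamily κ B X α E n N) :
    HasOrder 3 fun p ↦ waveResidualIm (X p.1) (α p.1) (E p.1) (N p.1) p.2 := by
  have hE' := h.depth.hasOrder_deriv.mul (.sin_mul_im N)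
  have hE'' := h.depth.hasOrder_deriv_deriv.mul (.sin_mul_im N)
  have hX'E' := h.amplitude.hasOrder_deriv.mul hE'
  have hα'E' := h.deriv_decay.of_sub_mul_scale_sq.mul hE'
  have hENNsin := ((h.depth.hasOrder.mul h.modFreq).mul h.modFreq).mul (.sin_mul_im N)
  exact ((hX'E'.const_mul 2).mono (by norm_num)).add (h.amplitude.hasOrder.mul
    (((hE''.mono (by norm_num)).sub ((hα'E'.const_mul 2).mono (by norm_num))).sub hENNsin))

lemma exists_norm_logHelmholtz_wave_le (h : IsWaveFamily κ B X α E n N)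
    (hκ : κ ^ 2 = B ^ 2 - lam) :
    ∃ K, 0 ≤ K ∧ ∀ i w, |scale w.re - node i| ≤ 1 →
      ‖logHelmholtz lam (wave (X i) (α i) (E i) (n i) (N i)) w‖
        ≤ K * scale w.re ^ 3 * Real.exp (-α i w.re) := by
  obtain ⟨K₁, hK₁₀, hK₁⟩ := (h.hasOrder_waveResidualRe hκ).exists_le
  obtain ⟨K₂, hK₂₀, hK₂⟩ := h.hasOrder_waveResidualIm.exists_le
  refine ⟨K₁ + K₂, add_nonneg hK₁₀ hK₂₀, fun i w hw ↦ ?_⟩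
  rw [logHelmholtz_wave (h.amplitude.contDiff i) (h.contDiff_decay i) (h.depth.contDiff i),
    norm_mul, norm_exp_add_mul_I, add_mul]
  gcongr
  refine (norm_add_le _ _).trans (add_le_add ?_ ?_)
  · simpa using hK₁ i w hw
  · simpa using hK₂ i w hw

end IsWaveFamily

end WaveFamily

/-! ### The waves of the blocks -/

/-- A smooth step from `0` to `1`, increasing on `[0, 1/8]`. -/
def step (x : ℝ) : ℝ := Real.smoothTransition (8 * x)

lemma contDiff_step : ContDiff ℝ 2 step :=
  Real.smoothTransition.contDiff.comp (contDiff_const.mul contDiff_id)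

lemma step_of_nonpos {x : ℝ} (hx : x ≤ 0) : step x = 0 :=
  Real.smoothTransition.zero_of_nonpos (by linarith)

lemma step_of_le {x : ℝ} (hx : 1 / 8 ≤ x) : step x = 1 :=
  Real.smoothTransition.one_of_one_le (by linarith)

lemma step_nonneg (x : ℝ) : 0 ≤ step x := Real.smoothTransition.nonneg _

lemma step_le_one (x : ℝ) : step x ≤ 1 := Real.smoothTransition.le_one _

/-- The cutoff of the wave of block `i`, equal to `1` for `|s - node i| ≤ 3/4` and to `0` for
`|s - node i| ≥ 7/8`; block `0` is not cut off towards the origin. -/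
def amplitude (i : ℕ) (t : ℝ) : ℝ :=
  (1 - step (scale t - node i - 3 / 4))
    * (1 - (if i = 0 then 0 else 1) * step (-(scale t - node i) - 3 / 4))

/-- The angular frequency of block `i`. Its sign alternates, so that the relative
phase of consecutive waves turns at a rate of order `B i²`. -/
def freq (B i : ℕ) : ℤ := (-1) ^ i * (B * (i + 10) ^ 2)

/-- The frequency of the phase modulation in block `i`: the frequency of the quotient of its wave
and the preceding one. -/
def modFreq (B : ℕ) : ℕ → ℤ
  | 0 => 0
  | j + 1 => freq B (j + 1) - freq B j

/-- The depth of the phase modulation in the inner half of block `i`. -/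
def modDepth (i : ℕ) : ℝ := 2 * (2 * node i - 1) / (node i ^ 2 + (node i - 1) ^ 2)

/-- The depth of the phase modulation, which is switched off in the outer half of block `i`. -/
def depth (i : ℕ) (t : ℝ) : ℝ := modDepth i * (1 - step (scale t - node i))

/-- The amount by which the decay rate in the outer half of block `j` exceeds the rate in the inner
half of block `j + 1`. -/
def rateGap (B : ℕ) (κ : ℝ) (j : ℕ) : ℝ := B ^ 2 / κ * (2 * node j + 1)

/-- The decay rate in the outer half of block `i`. -/
def outerRate (B : ℕ) (κ : ℝ) (i : ℕ) : ℝ :=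
  κ * (node i ^ 2 - node i - 1 / 2) + rateGap B κ i / 2

/-- The decay rate in the inner half of block `i`; the wave of block `0` is `z ^ n` there. -/
def innerRate (B : ℕ) (κ : ℝ) : ℕ → ℝ
  | 0 => -(B * node 0 ^ 2)
  | j + 1 => κ * (node j ^ 2 - node j - 1 / 2) - rateGap B κ j / 2

/-- The value of `t` at which the waves of blocks `j` and `j + 1` have the same size. -/
def crossing (j : ℕ) : ℝ := 2 * Real.log (node j + 1 / 2)

/-- The decay exponent at the centre of block `i`. -/
def centralDecay (B : ℕ) (κ : ℝ) : ℕ → ℝ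
  | 0 => innerRate B κ 0 * logNode 0
  | j + 1 => centralDecay B κ j + outerRate B κ j * (crossing j - logNode j)
      + innerRate B κ (j + 1) * (logNode (j + 1) - crossing j)

/-- The decay exponent of the wave of block `i`, affine in `t` in the inner half and, except for
`0 < s - node i < 1/8`, in the outer half. -/
def decay (B : ℕ) (κ : ℝ) (i : ℕ) (t : ℝ) : ℝ :=
  centralDecay B κ i + innerRate B κ i * (t - logNode i)
    + (outerRate B κ i - innerRate B κ i) * ((t - logNode i) * step (scale t - node i))

/-- The wave of block `i`. -/
def blockWave (B : ℕ) (κ : ℝ) (i : ℕ) : ℂ → ℂ :=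
  wave (amplitude i) (decay B κ i) (depth i) (freq B i) (modFreq B i)

section Orders

variable (B : ℕ) (κ : ℝ)

lemma isSymbol_amplitude : IsSymbol 0 amplitude := by
  have houter : IsSymbol 0 fun i t ↦ step (scale t - node i - 3 / 4) :=
    .comp_scale_sub_node (h := fun x ↦ step (x - 3 / 4))
      (contDiff_step.comp (contDiff_id.sub contDiff_const))
  have hinner : IsSymbol 0 fun i t ↦ step (-(scale t - node i) - 3 / 4) :=
    .comp_scale_sub_node (h := fun x ↦ step (-x - 3 / 4))
      (contDiff_step.comp (contDiff_id.neg.sub contDiff_const))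
  have hindicator : IsSymbol 0 fun i _ ↦ if i = 0 then (0 : ℝ) else 1 :=
    .of_const ((HasOrder.const 1).congr_succ (a := fun _ ↦ 1)
      (b := fun i ↦ if i = 0 then 0 else 1) le_rfl fun i ↦ if_neg i.succ_ne_zero)
  exact houter.one_sub.mul (hindicator.mul hinner).one_sub

lemma hasOrder_modDepth : HasOrder (-1) fun p ↦ modDepth p.1 := by
  refine .of_le (K := 8) fun i w hw ↦ ?_
  have ha := ten_le_node i
  have hs := scale_pos w.re
  rw [modDepth, abs_of_nonneg (by apply div_nonneg <;> nlinarith), zpow_neg_one,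
    ← div_eq_mul_inv, div_le_div_iff₀ (by nlinarith) hs]
  nlinarith [(scale_bounds hw).2.2]

lemma isSymbol_depth : IsSymbol (-1) depth :=
  (IsSymbol.of_const hasOrder_modDepth).mul (IsSymbol.comp_scale_sub_node contDiff_step).one_sub

lemma abs_freq (i : ℕ) : |(freq B i : ℝ)| = B * node i ^ 2 := by
  simp only [freq, node]
  push_cast
  rw [abs_mul, abs_neg_one_pow, one_mul, abs_of_nonneg (by positivity)]

lemma abs_modFreq_succ (j : ℕ) :
    |(modFreq B (j + 1) : ℝ)| = B * (node (j + 1) ^ 2 + node j ^ 2) := by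
  have hmodFreq : (modFreq B (j + 1) : ℝ)
      = (-1) ^ (j + 1) * (B * (node (j + 1) ^ 2 + node j ^ 2)) := by
    simp only [modFreq, freq, node, pow_succ]
    push_cast
    ring
  rw [hmodFreq, abs_mul, abs_neg_one_pow, one_mul, abs_of_nonneg (by positivity)]

lemma hasOrder_abs_freq : HasOrder 1 fun p ↦ |(freq B p.1 : ℝ)| - B * scale p.2.re ^ 2 := by
  simpa only [abs_freq, mul_sub] using HasOrder.node_sq_sub_scale_sq.const_mul B

lemma hasOrder_modFreq : HasOrder 2 fun p ↦ (modFreq B p.1 : ℝ) := by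
  refine isBigO_abs_left.mp ?_
  have hnode := HasOrder.of_node
  have hpred := hnode.sub ((HasOrder.const 1).mono zero_le_one)
  exact (((hnode.mul hnode).add (hpred.mul hpred)).const_mul B).congr_succ
    (a := fun i ↦ B * (node i * node i + (node i - 1) * (node i - 1)))
    (b := fun i ↦ |(modFreq B i : ℝ)|) zero_le_two fun j ↦ by
      rw [abs_modFreq_succ, node_succ]
      ring

lemma hasOrder_innerRate_sub :
    HasOrder 1 fun p ↦ innerRate B κ p.1 - κ * scale p.2.re ^ 2 := by
  have hlinear : HasOrder 1 fun p ↦ innerRate B κ p.1 - κ * node p.1 ^ 2 :=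
    ((HasOrder.of_node.const_mul (-3 * κ - B ^ 2 / κ)).add
      ((HasOrder.const (3 / 2 * κ + B ^ 2 / κ / 2)).mono zero_le_one)).congr_succ
      (a := fun i ↦ (-3 * κ - B ^ 2 / κ) * node i + (3 / 2 * κ + B ^ 2 / κ / 2))
      (b := fun i ↦ innerRate B κ i - κ * node i ^ 2) zero_le_one fun j ↦ by
        rw [innerRate, rateGap, node_succ]
        ring
  refine (hlinear.add (HasOrder.node_sq_sub_scale_sq.const_mul κ)).congr_left fun p ↦ ?_
  ring

lemma hasOrder_outerRate_sub_innerRate :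
    HasOrder 1 fun p ↦ outerRate B κ p.1 - innerRate B κ p.1 := by
  have houter : HasOrder 1 fun p ↦ outerRate B κ p.1 - κ * node p.1 ^ 2 := by
    refine ((HasOrder.of_node.const_mul (-κ + B ^ 2 / κ)).add
      ((HasOrder.const (-(κ / 2) + B ^ 2 / κ / 2)).mono zero_le_one)).congr_left fun p ↦ ?_
    rw [outerRate, rateGap]
    ring
  refine ((houter.add (HasOrder.node_sq_sub_scale_sq.const_mul κ)).sub
    (hasOrder_innerRate_sub B κ)).congr_left fun p ↦ ?_
  ring

lemma isSymbol_sub_logNode_mul_step :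
    IsSymbol (-1) fun i t ↦ (t - logNode i) * step (scale t - node i) :=
  IsSymbol.sub_logNode.mul (IsSymbol.comp_scale_sub_node contDiff_step)

lemma contDiff_decay (i : ℕ) : ContDiff ℝ 2 (decay B κ i) :=
  (contDiff_const.add (contDiff_const.mul (contDiff_id.sub contDiff_const))).add
    (contDiff_const.mul (isSymbol_sub_logNode_mul_step.contDiff i))

lemma deriv_decay (i : ℕ) : deriv (decay B κ i) = fun t ↦ innerRate B κ i
    + (outerRate B κ i - innerRate B κ i)
      * deriv (fun t ↦ (t - logNode i) * step (scale t - node i)) t := by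
  funext t
  have haffine : HasDerivAt (fun t ↦ centralDecay B κ i + innerRate B κ i * (t - logNode i))
      (innerRate B κ i) t := by
    simpa using (((hasDerivAt_id' t).sub_const (logNode i)).const_mul _).const_add
      (centralDecay B κ i)
  exact (haffine.add ((hasDerivAt_deriv_of_contDiff_two
    (isSymbol_sub_logNode_mul_step.contDiff i) t).const_mul _)).deriv

lemma isWaveFamily : IsWaveFamily κ B amplitude (decay B κ) depth
    (fun i ↦ freq B i) (fun i ↦ modFreq B i) where
  amplitude := isSymbol_amplitude
  contDiff_decay := contDiff_decay B κ
  deriv_decay := by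
    simp only [deriv_decay]
    refine ((hasOrder_innerRate_sub B κ).add ((hasOrder_outerRate_sub_innerRate B κ).mul
      isSymbol_sub_logNode_mul_step.hasOrder_deriv)).congr_left fun p ↦ ?_
    ring
  deriv_deriv_decay := by
    simp only [deriv_decay, deriv_const_add, deriv_const_mul_field']
    exact (hasOrder_outerRate_sub_innerRate B κ).mul
      isSymbol_sub_logNode_mul_step.hasOrder_deriv_deriv
  depth := isSymbol_depth
  abs_freq := hasOrder_abs_freq B
  modFreq := hasOrder_modFreq B

end Orders

section Amplitude

variable {i : ℕ} {t : ℝ}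

lemma abs_amplitude_le_one (i : ℕ) (t : ℝ) : |amplitude i t| ≤ 1 := by
  have hbound (x : ℝ) : 0 ≤ 1 - step x ∧ 1 - step x ≤ 1 :=
    ⟨sub_nonneg.mpr (step_le_one x), sub_le_self 1 (step_nonneg x)⟩
  have hinner (x : ℝ) : 0 ≤ 1 - (if i = 0 then 0 else 1) * step x
      ∧ 1 - (if i = 0 then 0 else 1) * step x ≤ 1 := by
    split_ifs
    · simp
    · simpa using hbound x
  rw [amplitude, abs_of_nonneg (mul_nonneg (hbound _).1 (hinner _).1)]
  exact mul_le_one₀ (hbound _).2 (hinner _).1 (hinner _).2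

lemma amplitude_eq_one (h : |scale t - node i| ≤ 3 / 4) : amplitude i t = 1 := by
  obtain ⟨h₁, h₂⟩ := abs_le.mp h
  rw [amplitude, step_of_nonpos (by linarith), step_of_nonpos (by linarith)]
  ring

lemma amplitude_zero_eq_one (h : scale t ≤ node 0 + 3 / 4) : amplitude 0 t = 1 := by
  rw [amplitude, step_of_nonpos (by linarith), if_pos rfl]
  ring

lemma amplitude_eq_zero_of_le (h : node i + 7 / 8 ≤ scale t) : amplitude i t = 0 := by
  rw [amplitude, step_of_le (by linarith), sub_self, zero_mul]

lemma amplitude_eq_zero_of_le_sub (hi : i ≠ 0) (h : scale t ≤ node i - 7 / 8) :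
    amplitude i t = 0 := by
  rw [amplitude, step_of_le (x := -(scale t - node i) - 3 / 4) (by linarith), if_neg hi, one_mul,
    sub_self, mul_zero]

end Amplitude

section Decay

variable {B : ℕ} {κ : ℝ} {i j : ℕ} {t : ℝ}

lemma norm_blockWave (w : ℂ) :
    ‖blockWave B κ i w‖ = |amplitude i w.re| * Real.exp (-decay B κ i w.re) :=
  norm_wave w

lemma norm_blockWave_le (w : ℂ) : ‖blockWave B κ i w‖ ≤ Real.exp (-decay B κ i w.re) := by
  rw [norm_blockWave]
  exact mul_le_of_le_one_left (Real.exp_pos _).le (abs_amplitude_le_one _ _)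

lemma decay_of_scale_le (h : scale t ≤ node i) :
    decay B κ i t = centralDecay B κ i + innerRate B κ i * (t - logNode i) := by
  rw [decay, step_of_nonpos (by linarith), mul_zero, mul_zero, add_zero]

lemma decay_of_le_scale (h : node i + 1 / 8 ≤ scale t) :
    decay B κ i t = centralDecay B κ i + outerRate B κ i * (t - logNode i) := by
  rw [decay, step_of_le (by linarith)]
  ring

lemma decay_zero_of_scale_le (h : scale t ≤ node 0) : decay B κ 0 t = -(B * node 0 ^ 2) * t := by
  rw [decay_of_scale_le h, centralDecay, innerRate]
  ring

lemma logNode_le (h : node i ≤ scale t) : logNode i ≤ t := by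
  rw [logNode, ← two_mul_log_scale t]
  gcongr
  exact node_pos i

lemma rateGap_nonneg (hκ : 0 < κ) (j : ℕ) : 0 ≤ rateGap B κ j := by
  have := node_pos j
  rw [rateGap]
  positivity

lemma four_mul_le_rateGap (hκ : 0 < κ) (hκB : κ ≤ B) (hB : 4 ≤ B) (j : ℕ) :
    4 * (2 * node j + 1) ≤ rateGap B κ j := by
  have hB' : (4 : ℝ) ≤ B := by exact_mod_cast hB
  have := node_pos j
  rw [rateGap]
  gcongr
  rw [le_div_iff₀ hκ]
  nlinarith

lemma innerRate_le_outerRate (hκ : 0 < κ) (i : ℕ) : innerRate B κ i ≤ outerRate B κ i := by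
  have hnode := ten_le_node i
  have houter : 0 ≤ outerRate B κ i := by
    have := rateGap_nonneg (B := B) hκ i
    rw [outerRate]
    have : 0 ≤ κ * (node i ^ 2 - node i - 1 / 2) := mul_nonneg hκ.le (by nlinarith)
    positivity
  cases i with
  | zero =>
    refine le_trans ?_ houter
    rw [innerRate, neg_nonpos]
    positivity
  | succ j =>
    have h₀ := rateGap_nonneg (B := B) hκ j
    have h₁ := rateGap_nonneg (B := B) hκ (j + 1)
    have hj := ten_le_node j
    rw [innerRate, outerRate, node_succ]
    nlinarith

lemma decay_le (hκ : 0 < κ) (h : node i ≤ scale t) :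
    decay B κ i t ≤ centralDecay B κ i + outerRate B κ i * (t - logNode i) := by
  have hstep : (t - logNode i) * step (scale t - node i) ≤ t - logNode i :=
    mul_le_of_le_one_right (sub_nonneg.mpr (logNode_le h)) (step_le_one _)
  rw [decay]
  linarith [mul_le_mul_of_nonneg_left hstep (sub_nonneg.mpr (innerRate_le_outerRate (B := B) hκ i))]

lemma decay_succ_sub (h : scale t ≤ node (j + 1)) :
    decay B κ (j + 1) t
      - (centralDecay B κ j + outerRate B κ j * (t - logNode j))
      = rateGap B κ j * (crossing j - t) := by
  rw [decay_of_scale_le h, centralDecay, outerRate, innerRate]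
  ring

lemma rateGap_mul_le_decay_sub (hκ : 0 < κ) (h₁ : node j ≤ scale t) (h₂ : scale t ≤ node (j + 1)) :
    rateGap B κ j * (crossing j - t) ≤ decay B κ (j + 1) t - decay B κ j t := by
  rw [← decay_succ_sub h₂]
  linarith [decay_le (B := B) hκ h₁]

lemma decay_succ_sub_decay (h₁ : node j + 1 / 8 ≤ scale t) (h₂ : scale t ≤ node (j + 1)) :
    decay B κ (j + 1) t - decay B κ j t = rateGap B κ j * (crossing j - t) := by
  rw [← decay_succ_sub h₂, decay_of_le_scale h₁]

lemma scale_crossing (j : ℕ) : scale (crossing j) = node j + 1 / 2 := by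
  have := node_pos j
  rw [scale, crossing, mul_div_cancel_left₀ _ two_ne_zero, Real.exp_log (by positivity)]

lemma decay_succ_crossing (j : ℕ) : decay B κ (j + 1) (crossing j) = decay B κ j (crossing j) := by
  have hscale := scale_crossing j
  have h := decay_succ_sub_decay (B := B) (κ := κ) (t := crossing j) (j := j)
    (by rw [hscale]; linarith) (by rw [hscale, node_succ]; linarith)
  rwa [sub_self, mul_zero, sub_eq_zero] at h

lemma two_mul_sub_div_le_log_sub_log {x y : ℝ} (hx : 0 < x) (hy : 0 < y) :
    2 * (x - y) / x ≤ 2 * Real.log x - 2 * Real.log y := by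
  have h := Real.one_sub_inv_le_log_of_pos (div_pos hx hy)
  rw [Real.log_div hx.ne' hy.ne', inv_div, one_sub_div hx.ne'] at h
  rw [mul_div_assoc]
  linarith

lemma exp_neg_le_half_mul {x y : ℝ} (h : x + 1 ≤ y) : Real.exp (-y) ≤ Real.exp (-x) / 2 := by
  have hexp : Real.exp (-y) * 2 ≤ Real.exp (-y) * Real.exp (y - x) := by
    gcongr
    linarith [Real.add_one_le_exp (y - x)]
  rw [← Real.exp_add, show -y + (y - x) = -x by ring] at hexp
  linarith

lemma exp_neg_decay_succ_le (hκ : 0 < κ) (hκB : κ ≤ B) (hB : 4 ≤ B) (h₁ : node j ≤ scale t)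
    (h₂ : scale t ≤ node j + 1 / 4) :
    Real.exp (-decay B κ (j + 1) t) ≤ Real.exp (-decay B κ j t) / 2 := by
  have hnode := node_pos j
  refine exp_neg_le_half_mul ?_
  have hlog : 1 / (2 * node j + 1) ≤ crossing j - t := by
    refine le_trans ?_ ((two_mul_sub_div_le_log_sub_log (x := node j + 1 / 2) (by positivity)
      (scale_pos t)).trans_eq (by rw [two_mul_log_scale, crossing]))
    rw [div_le_div_iff₀ (by positivity) (by positivity)]
    nlinarith
  have hgap : 4 ≤ rateGap B κ j * (crossing j - t) := by
    calc 4 = 4 * (2 * node j + 1) * (1 / (2 * node j + 1)) := by field_simp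
      _ ≤ rateGap B κ j * (crossing j - t) := by
        gcongr
        · exact rateGap_nonneg hκ j
        · exact four_mul_le_rateGap hκ hκB hB j
  linarith [rateGap_mul_le_decay_sub (B := B) hκ h₁ (by rw [node_succ]; linarith)]

lemma exp_neg_decay_le (hκ : 0 < κ) (hκB : κ ≤ B) (hB : 4 ≤ B) (h₁ : node j + 3 / 4 ≤ scale t)
    (h₂ : scale t ≤ node (j + 1)) :
    Real.exp (-decay B κ j t) ≤ Real.exp (-decay B κ (j + 1) t) / 2 := by
  have hnode := node_pos j
  have hscale := scale_pos t
  refine exp_neg_le_half_mul ?_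
  have hlog : 1 / (4 * (2 * node j + 1)) ≤ t - crossing j := by
    refine le_trans ?_ ((two_mul_sub_div_le_log_sub_log (y := node j + 1 / 2) hscale
      (by positivity)).trans_eq (by rw [two_mul_log_scale, crossing]))
    rw [div_le_div_iff₀ (by positivity) (by positivity)]
    nlinarith
  have hgap : 1 ≤ rateGap B κ j * (t - crossing j) := by
    calc 1 = 4 * (2 * node j + 1) * (1 / (4 * (2 * node j + 1))) := by field_simp
      _ ≤ rateGap B κ j * (t - crossing j) := by
        gcongr
        · exact rateGap_nonneg hκ j
        · exact four_mul_le_rateGap hκ hκB hB j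
  have h := decay_succ_sub_decay (B := B) (κ := κ) (by linarith) h₂
  linarith

end Decay

/-! ### Interference of consecutive waves -/

lemma exp_mul_abs_cos_half_sub_le_norm_add (a b φ ψ : ℝ) :
    Real.exp b * |Real.cos ((ψ - φ) / 2)|
      ≤ ‖Complex.exp (a + φ * Complex.I) + Complex.exp (b + ψ * Complex.I)‖ := by
  -- After rotation by the mean phase both summands have the same cosine as real part.
  have hrotate : (Complex.exp (((-(φ + ψ) / 2 : ℝ) : ℂ) * Complex.I)
      * (Complex.exp (a + φ * Complex.I) + Complex.exp (b + ψ * Complex.I))).re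
        = (Real.exp a + Real.exp b) * Real.cos ((ψ - φ) / 2) := by
    have hexponent (c χ : ℝ) : ((-(φ + ψ) / 2 : ℝ) : ℂ) * Complex.I + (c + χ * Complex.I)
        = c + (χ - (φ + ψ) / 2 : ℝ) * Complex.I := by
      push_cast
      ring
    have hφ : φ - (φ + ψ) / 2 = -((ψ - φ) / 2) := by ring
    have hψ : ψ - (φ + ψ) / 2 = (ψ - φ) / 2 := by ring
    have hre (c χ : ℝ) : (Complex.exp (c + χ * Complex.I)).re = Real.exp c * Real.cos χ := by
      simp [Complex.exp_re]
    rw [mul_add, ← Complex.exp_add, ← Complex.exp_add, hexponent, hexponent, Complex.add_re,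
      hre, hre, hφ, hψ, Real.cos_neg]
    ring
  calc Real.exp b * |Real.cos ((ψ - φ) / 2)|
      ≤ (Real.exp a + Real.exp b) * |Real.cos ((ψ - φ) / 2)| := by
        gcongr
        linarith [Real.exp_pos a]
    _ = |(Real.exp a + Real.exp b) * Real.cos ((ψ - φ) / 2)| := by
        rw [abs_mul, abs_of_pos (add_pos (Real.exp_pos a) (Real.exp_pos b))]
    _ ≤ _ := by
        rw [← hrotate]
        refine (Complex.abs_re_le_norm _).trans_eq ?_
        rw [norm_mul, Complex.norm_exp_ofReal_mul_I, one_mul]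

lemma abs_cos_half_le {ε : ℝ} (hε₀ : 0 ≤ ε) (hε : ε ≤ 3 / 10) (x : ℝ) :
    |Real.cos (x / 2)| ≤ 2 * |Real.cos ((x + ε * Real.sin x) / 2)| := by
  set y := x / 2 with hy
  set η := ε * (Real.sin y * Real.cos y) with hη
  have hargument : (x + ε * Real.sin x) / 2 = y + η := by
    rw [show x = 2 * y by rw [hy]; ring, Real.sin_two_mul]
    ring
  have hη_le : |η| ≤ 3 / 10 * |Real.cos y| := by
    rw [hη, abs_mul, abs_mul, abs_of_nonneg hε₀]
    gcongr
    exact mul_le_of_le_one_left (abs_nonneg _) (Real.abs_sin_le_one y)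
  have hcosη : 9 / 10 ≤ Real.cos η := by
    have hη_sq : η ^ 2 ≤ (3 / 10) ^ 2 :=
      sq_le_sq' (by linarith [neg_abs_le η, Real.abs_cos_le_one y])
        (by linarith [le_abs_self η, Real.abs_cos_le_one y])
    linarith [Real.one_sub_sq_div_two_le_cos (x := η)]
  have hsin : |Real.sin y * Real.sin η| ≤ 3 / 10 * |Real.cos y| := by
    rw [abs_mul]
    exact (mul_le_of_le_one_left (abs_nonneg _) (Real.abs_sin_le_one y)).trans
      (Real.abs_sin_le_abs.trans hη_le)
  have hcos : 9 / 10 * |Real.cos y| ≤ |Real.cos y * Real.cos η| := by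
    rw [abs_mul, mul_comm]
    gcongr
    exact hcosη.trans (le_abs_self _)
  rw [hargument, Real.cos_add]
  linarith [abs_sub_abs_le_abs_sub (Real.cos y * Real.cos η) (Real.sin y * Real.sin η),
    abs_nonneg (Real.cos y)]

section Overlap

variable {B : ℕ} {κ lam : ℝ} {j : ℕ} {w : ℂ}

lemma modDepth_succ_nonneg (j : ℕ) : 0 ≤ modDepth (j + 1) := by
  have := node_pos j
  rw [modDepth, node_succ]
  apply div_nonneg <;> nlinarith

lemma modDepth_succ_le (j : ℕ) : modDepth (j + 1) ≤ 3 / 10 := by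
  have := ten_le_node j
  rw [modDepth, node_succ, div_le_div_iff₀ (by positivity) (by norm_num)]
  nlinarith

/-- The choice of the modulation depth: the modulation shifts the frequency of block `j + 1`, where
it interferes destructively with block `j`, to the value matching the decay rate there. -/
lemma innerRate_succ_sq_sub (hκ : κ ≠ 0) (j : ℕ) :
    innerRate B κ (j + 1) ^ 2 - (freq B (j + 1) - modDepth (j + 1) * modFreq B (j + 1)) ^ 2
      = outerRate B κ j ^ 2 - (freq B j : ℝ) ^ 2 := by
  have := node_pos j
  have hfreq (i : ℕ) : (freq B i : ℝ) = (-1) ^ i * (B * node i ^ 2) := by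
    simp only [freq, node]
    push_cast
    ring
  have hshift : freq B (j + 1) - modDepth (j + 1) * modFreq B (j + 1)
      = (-1) ^ (j + 1) * (B * (node j ^ 2 - 2 * node j - 1)) := by
    rw [modDepth, modFreq, Int.cast_sub, hfreq, hfreq, node_succ, pow_succ (-1 : ℝ) j]
    field_simp
    ring
  have hsign (i : ℕ) : ((-1 : ℝ) ^ i) ^ 2 = 1 := by rw [← pow_mul, mul_comm, pow_mul]; simp
  rw [hshift, hfreq]
  simp only [mul_pow, hsign, one_mul]
  rw [innerRate, outerRate, rateGap]
  field_simp
  ring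

lemma exists_logHelmholtz_wave_affine (lam c p t₀ ε n N : ℝ) (w : ℂ) :
    ∃ ρ : ℂ, logHelmholtz lam (wave (fun _ ↦ 1) (fun t ↦ c + p * (t - t₀)) (fun _ ↦ ε) n N) w
        = ((p ^ 2 - (n - ε * N) ^ 2 + lam * Real.exp (2 * w.re) : ℝ)
            + Real.cos (N * w.im / 2) * ρ)
          * wave (fun _ ↦ 1) (fun t ↦ c + p * (t - t₀)) (fun _ ↦ ε) n N w
      ∧ ‖ρ‖ ≤ 4 * |n * (ε * N)| + 4 * (ε * N) ^ 2 + 2 * |ε * N * N| := by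
  set h := N * w.im / 2 with h_def
  have hangle : N * w.im = 2 * h := by rw [h_def]; ring
  have hderiv : deriv (fun t ↦ c + p * (t - t₀)) = fun _ ↦ p := by
    funext t
    simp
  have hcontDiff : ContDiff ℝ 2 fun t ↦ c + p * (t - t₀) := by fun_prop
  refine ⟨(-4 * (n * (ε * N)) * Real.cos h + 4 * (ε * N) ^ 2 * Real.sin h ^ 2 * Real.cos h : ℝ)
    + (-2 * (ε * N * N) * Real.sin h : ℝ) * Complex.I, ?_, ?_⟩
  · rw [logHelmholtz_wave contDiff_const hcontDiff contDiff_const, waveResidualRe, waveResidualIm,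
      wave, hderiv, hangle, Real.cos_two_mul, Real.sin_two_mul]
    simp only [deriv_const', Complex.ofReal_one, one_mul]
    congr 1
    push_cast
    have hsin_sq := Complex.sin_sq_add_cos_sq h
    linear_combination (-4 * (ε * N) ^ 2 * Complex.cos h ^ 2 : ℂ) * hsin_sq
  · have hsin := Real.abs_sin_le_one h
    have hcos := Real.abs_cos_le_one h
    refine (norm_add_le _ _).trans (add_le_add ?_ ?_)
    · rw [Complex.norm_real, Real.norm_eq_abs]
      refine (abs_add_le _ _).trans (add_le_add ?_ ?_)
      · rw [abs_mul, abs_mul, abs_neg, abs_of_pos four_pos]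
        exact mul_le_of_le_one_right (by positivity) hcos
      · rw [abs_mul, abs_mul, abs_of_nonneg (by positivity), abs_pow, mul_assoc]
        exact mul_le_of_le_one_right (by positivity)
          (mul_le_one₀ (pow_le_one₀ (abs_nonneg _) hsin) (abs_nonneg _) hcos)
    · rw [norm_mul, Complex.norm_I, mul_one, Complex.norm_real, Real.norm_eq_abs, abs_mul, abs_mul,
        abs_neg, abs_of_pos two_pos]
      exact mul_le_of_le_one_right (by positivity) hsin

lemma eventuallyEq_wave {X X' α α' E E' : ℝ → ℝ} {w : ℂ} (hX : X =ᶠ[𝓝 w.re] X')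
    (hα : α =ᶠ[𝓝 w.re] α') (hE : E =ᶠ[𝓝 w.re] E') (n N : ℝ) :
    wave X α E n N =ᶠ[𝓝 w] wave X' α' E' n N := by
  have hre : Tendsto Complex.re (𝓝 w) (𝓝 w.re) := Complex.continuous_re.continuousAt
  filter_upwards [hre.eventually hX, hre.eventually hα, hre.eventually hE] with y h₁ h₂ h₃
  rw [wave, wave, h₁, h₂, h₃]

lemma eventually_scale_mem_Ioo {t a b : ℝ} (ha : a < scale t) (hb : scale t < b) :
    ∀ᶠ τ in 𝓝 t, a < scale τ ∧ scale τ < b :=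
  contDiff_scale.continuous.continuousAt.eventually (Ioo_mem_nhds ha hb)

lemma blockWave_eventuallyEq_outer (h₁ : node j + 1 / 8 < scale w.re)
    (h₂ : scale w.re < node j + 3 / 4) :
    blockWave B κ j =ᶠ[𝓝 w] wave (fun _ ↦ 1)
      (fun t ↦ centralDecay B κ j + outerRate B κ j * (t - logNode j)) (fun _ ↦ 0)
      (freq B j) (modFreq B j) := by
  have hnear := eventually_scale_mem_Ioo h₁ h₂
  refine eventuallyEq_wave (hnear.mono fun τ hτ ↦ ?_) (hnear.mono fun τ hτ ↦ ?_)
    (hnear.mono fun τ hτ ↦ ?_) _ _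
  · exact amplitude_eq_one (abs_le.mpr ⟨by linarith, by linarith⟩)
  · exact decay_of_le_scale hτ.1.le
  · rw [depth, step_of_le (by linarith), sub_self, mul_zero]

lemma blockWave_succ_eventuallyEq_inner (h₁ : node j + 1 / 4 < scale w.re)
    (h₂ : scale w.re < node j + 1) :
    blockWave B κ (j + 1) =ᶠ[𝓝 w] wave (fun _ ↦ 1)
      (fun t ↦ centralDecay B κ (j + 1) + innerRate B κ (j + 1) * (t - logNode (j + 1)))
      (fun _ ↦ modDepth (j + 1)) (freq B (j + 1)) (modFreq B (j + 1)) := by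
  have hnear := eventually_scale_mem_Ioo h₁ h₂
  refine eventuallyEq_wave (hnear.mono fun τ hτ ↦ ?_) (hnear.mono fun τ hτ ↦ ?_)
    (hnear.mono fun τ hτ ↦ ?_) _ _
  · exact amplitude_eq_one (abs_le.mpr (by rw [node_succ]; constructor <;> linarith))
  · exact decay_of_scale_le (by rw [node_succ]; exact hτ.2.le)
  · rw [depth, step_of_nonpos (by rw [node_succ]; linarith), sub_zero, mul_one]

lemma exp_neg_decay_mul_abs_cos_le (h₁ : node j + 1 / 4 < scale w.re)
    (h₂ : scale w.re < node j + 3 / 4) :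
    Real.exp (-decay B κ (j + 1) w.re) * |Real.cos (modFreq B (j + 1) * w.im / 2)|
      ≤ 2 * ‖blockWave B κ j w + blockWave B κ (j + 1) w‖ := by
  have hphase : (freq B (j + 1) * w.im
        + modDepth (j + 1) * Real.sin (modFreq B (j + 1) * w.im)) - freq B j * w.im
      = modFreq B (j + 1) * w.im + modDepth (j + 1) * Real.sin (modFreq B (j + 1) * w.im) := by
    rw [modFreq, Int.cast_sub]
    ring
  have hdecay : decay B κ (j + 1) w.re
      = centralDecay B κ (j + 1) + innerRate B κ (j + 1) * (w.re - logNode (j + 1)) :=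
    decay_of_scale_le (by rw [node_succ]; linarith)
  have hnorm := exp_mul_abs_cos_half_sub_le_norm_add
    (-(centralDecay B κ j + outerRate B κ j * (w.re - logNode j))) (-decay B κ (j + 1) w.re)
    (freq B j * w.im) (freq B (j + 1) * w.im
        + modDepth (j + 1) * Real.sin (modFreq B (j + 1) * w.im))
  rw [hphase] at hnorm
  calc _ ≤ Real.exp (-decay B κ (j + 1) w.re) * (2 * |Real.cos ((modFreq B (j + 1) * w.im
          + modDepth (j + 1) * Real.sin (modFreq B (j + 1) * w.im)) / 2)|) := by
        gcongr
        exact abs_cos_half_le (modDepth_succ_nonneg j) (modDepth_succ_le j) _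
    _ ≤ 2 * ‖blockWave B κ j w + blockWave B κ (j + 1) w‖ := by
        rw [(blockWave_eventuallyEq_outer (by linarith) h₂).eq_of_nhds,
          (blockWave_succ_eventuallyEq_inner h₁ (by linarith)).eq_of_nhds, wave, wave, ← hdecay]
        simp only [Complex.ofReal_one, one_mul, zero_mul, add_zero]
        linarith

lemma hasOrder_modulationError (B : ℕ) : HasOrder 3 fun p ↦
    4 * |freq B p.1 * (modDepth p.1 * modFreq B p.1)| + 4 * (modDepth p.1 * modFreq B p.1) ^ 2
      + 2 * |modDepth p.1 * modFreq B p.1 * modFreq B p.1| := by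
  have hfreq := (isWaveFamily B 0).hasOrder_freq
  have hmod := hasOrder_modDepth.mul (hasOrder_modFreq B)
  have hsq : HasOrder 3 fun p ↦ 4 * (modDepth p.1 * modFreq B p.1) ^ 2 := by
    simpa only [sq] using ((hmod.mul hmod).const_mul 4).mono (by norm_num)
  exact (((hfreq.mul hmod).abs.const_mul 4).add hsq).add
    ((hmod.mul (hasOrder_modFreq B)).abs.const_mul 2)

lemma logHelmholtz_blockWave_outer (h₁ : node j + 1 / 8 < scale w.re)
    (h₂ : scale w.re < node j + 3 / 4) :
    logHelmholtz lam (blockWave B κ j) w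
      = (outerRate B κ j ^ 2 - freq B j ^ 2 + lam * Real.exp (2 * w.re) : ℝ)
        * blockWave B κ j w := by
  obtain ⟨ρ, hρ, hρ_le⟩ := exists_logHelmholtz_wave_affine lam (centralDecay B κ j)
    (outerRate B κ j) (logNode j) 0 (freq B j) (modFreq B j) w
  have hρ_zero : ρ = 0 := by simpa using hρ_le
  have heq := blockWave_eventuallyEq_outer (B := B) (κ := κ) h₁ h₂
  rw [logHelmholtz_congr heq, hρ, heq.eq_of_nhds, hρ_zero, zero_mul, sub_zero, mul_zero, add_zero]

lemma exists_logHelmholtz_blockWave_succ_inner (hκ : κ ≠ 0) (h₁ : node j + 1 / 4 < scale w.re)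
    (h₂ : scale w.re < node j + 1) :
    ∃ ρ : ℂ, logHelmholtz lam (blockWave B κ (j + 1)) w
        = ((outerRate B κ j ^ 2 - freq B j ^ 2 + lam * Real.exp (2 * w.re) : ℝ)
          + Real.cos (modFreq B (j + 1) * w.im / 2) * ρ) * blockWave B κ (j + 1) w
      ∧ ‖ρ‖ ≤ 4 * |freq B (j + 1) * (modDepth (j + 1) * modFreq B (j + 1))|
        + 4 * (modDepth (j + 1) * modFreq B (j + 1)) ^ 2
        + 2 * |modDepth (j + 1) * modFreq B (j + 1) * modFreq B (j + 1)| := by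
  obtain ⟨ρ, hρ, hρ_le⟩ := exists_logHelmholtz_wave_affine lam (centralDecay B κ (j + 1))
    (innerRate B κ (j + 1)) (logNode (j + 1)) (modDepth (j + 1)) (freq B (j + 1))
    (modFreq B (j + 1)) w
  have heq := blockWave_succ_eventuallyEq_inner (B := B) (κ := κ) h₁ h₂
  refine ⟨ρ, ?_, hρ_le⟩
  rw [logHelmholtz_congr heq, hρ, heq.eq_of_nhds, innerRate_succ_sq_sub hκ]

lemma deriv_decay_outer (h : node j + 1 / 8 < scale w.re) :
    deriv (decay B κ j) w.re = outerRate B κ j := by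
  have heq : decay B κ j =ᶠ[𝓝 w.re]
      fun t ↦ centralDecay B κ j + outerRate B κ j * (t - logNode j) :=
    (contDiff_scale.continuous.continuousAt.eventually (lt_mem_nhds h)).mono
      fun τ hτ ↦ decay_of_le_scale hτ.le
  rw [heq.deriv_eq]
  simp

lemma contDiff_blockWave (B : ℕ) (κ : ℝ) (i : ℕ) : ContDiff ℝ 2 (blockWave B κ i) :=
  contDiff_wave (isSymbol_amplitude.contDiff i) (contDiff_decay B κ i) (isSymbol_depth.contDiff i)

lemma exists_norm_logHelmholtz_overlap_le (hκ₀ : κ ≠ 0) (hκ : κ ^ 2 = B ^ 2 - lam) :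
    ∃ K, 0 ≤ K ∧ ∀ j w, node j + 1 / 4 < scale w.re → scale w.re < node j + 3 / 4 →
      ‖logHelmholtz lam (blockWave B κ j + blockWave B κ (j + 1)) w‖
        ≤ K * scale w.re ^ 3 * ‖blockWave B κ j w + blockWave B κ (j + 1) w‖ := by
  obtain ⟨K₁, hK₁₀, hK₁⟩ := ((isWaveFamily B κ).hasOrder_principal hκ).exists_le
  obtain ⟨K₂, hK₂₀, hK₂⟩ := (hasOrder_modulationError B).exists_le
  refine ⟨K₁ + 2 * K₂, by positivity, fun j w h₁ h₂ ↦ ?_⟩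
  set W := blockWave B κ j w + blockWave B κ (j + 1) w with hW
  set P : ℝ := outerRate B κ j ^ 2 - freq B j ^ 2 + lam * Real.exp (2 * w.re)
  have hs : 0 ≤ scale w.re ^ 3 := pow_nonneg (scale_pos _).le 3
  have hP_le : |P| ≤ K₁ * scale w.re ^ 3 := by
    have h := hK₁ j w (abs_le.mpr ⟨by linarith, by linarith⟩)
    rwa [deriv_decay_outer (by linarith)] at h
  obtain ⟨ρ, hρ, hρ_bound⟩ := exists_logHelmholtz_blockWave_succ_inner (B := B) (κ := κ)
    (lam := lam) hκ₀ h₁ (by linarith)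
  have hρ_le : ‖ρ‖ ≤ K₂ * scale w.re ^ 3 := hρ_bound.trans <| (le_abs_self _).trans <|
    hK₂ (j + 1) w (by rw [node_succ, abs_le]; constructor <;> linarith)
  have hsum : logHelmholtz lam (blockWave B κ j + blockWave B κ (j + 1)) w
      = P * W + Real.cos (modFreq B (j + 1) * w.im / 2) * ρ * blockWave B κ (j + 1) w := by
    rw [logHelmholtz_add (contDiff_blockWave B κ j).contDiffAt
      (contDiff_blockWave B κ (j + 1)).contDiffAt, hρ,
      logHelmholtz_blockWave_outer (by linarith) h₂, hW]
    ring
  have hinterference : |Real.cos (modFreq B (j + 1) * w.im / 2)| * ‖blockWave B κ (j + 1) w‖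
      ≤ 2 * ‖W‖ :=
    (mul_le_mul_of_nonneg_left (norm_blockWave_le w) (abs_nonneg _)).trans
      ((mul_comm _ _).trans_le (exp_neg_decay_mul_abs_cos_le h₁ h₂))
  calc _ ≤ |P| * ‖W‖ + ‖ρ‖ * (|Real.cos (modFreq B (j + 1) * w.im / 2)|
          * ‖blockWave B κ (j + 1) w‖) := by
        rw [hsum]
        refine (norm_add_le _ _).trans_eq ?_
        simp only [norm_mul, Complex.norm_real, Real.norm_eq_abs]
        ring
    _ ≤ K₁ * scale w.re ^ 3 * ‖W‖ + K₂ * scale w.re ^ 3 * (2 * ‖W‖) := by gcongr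
    _ = _ := by ring

end Overlap

/-! ### The quasimode -/

section Quasimode

variable {B : ℕ} {κ lam : ℝ} {j : ℕ} {t : ℝ} {w : ℂ}

/-- The quasimode in the logarithmic coordinate: the sum of the waves of all blocks, of which at
most two are nonzero at any point. -/
def quasimode (B : ℕ) (κ : ℝ) (w : ℂ) : ℂ := ∑' i, blockWave B κ i w

lemma scale_logNode (i : ℕ) : scale (logNode i) = node i := by
  rw [scale, logNode, mul_div_cancel_left₀ _ two_ne_zero, Real.exp_log (node_pos i)]

lemma strictMono_scale : StrictMono scale := fun _ _ h ↦ Real.exp_lt_exp.mpr (by linarith)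

lemma exists_node_le {s : ℝ} (hs : 10 ≤ s) : ∃ j, node j ≤ s ∧ s < node (j + 1) := by
  refine ⟨⌊s - 10⌋₊, ?_, ?_⟩
  · rw [node]
    linarith [Nat.floor_le (sub_nonneg.mpr hs)]
  · rw [node_succ, node]
    linarith [Nat.lt_floor_add_one (s - 10)]

lemma node_add_one_le {i j : ℕ} (h : i < j) : node i + 1 ≤ node j := by
  rw [← node_succ, node, node]
  gcongr
  exact h

lemma blockWave_eq_zero {i : ℕ} (h : amplitude i w.re = 0) : blockWave B κ i w = 0 := by
  rw [blockWave, wave, h, Complex.ofReal_zero, zero_mul]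

lemma quasimode_eq_add (h₁ : j = 0 ∨ node j - 1 / 8 ≤ scale w.re)
    (h₂ : scale w.re ≤ node j + 9 / 8) :
    quasimode B κ w = blockWave B κ j w + blockWave B κ (j + 1) w := by
  rw [quasimode, tsum_eq_sum (s := {j, j + 1}), Finset.sum_pair j.succ_ne_self.symm]
  intro i hi
  simp only [Finset.mem_insert, Finset.mem_singleton, not_or] at hi
  rcases lt_or_gt_of_ne hi.1 with hij | hji
  · refine blockWave_eq_zero (amplitude_eq_zero_of_le ?_)
    linarith [node_add_one_le hij, h₁.resolve_left (by lia)]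
  · refine blockWave_eq_zero (amplitude_eq_zero_of_le_sub (by lia) ?_)
    linarith [node_add_one_le (show j + 1 < i by lia), node_succ j]

lemma quasimode_eventuallyEq (h₁ : j = 0 ∨ node j ≤ scale w.re) (h₂ : scale w.re < node (j + 1)) :
    quasimode B κ =ᶠ[𝓝 w] blockWave B κ j + blockWave B κ (j + 1) := by
  have hscale : Tendsto (fun y : ℂ ↦ scale y.re) (𝓝 w) (𝓝 (scale w.re)) :=
    (contDiff_scale.continuous.comp Complex.continuous_re).continuousAt
  rw [node_succ] at h₂
  have hleft : ∀ᶠ y : ℂ in 𝓝 w, j = 0 ∨ node j - 1 / 8 ≤ scale y.re := by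
    refine h₁.elim (fun hj ↦ .of_forall fun _ ↦ .inl hj) fun hj ↦ ?_
    exact (hscale.eventually_const_le (by linarith)).mono fun _ ↦ .inr
  filter_upwards [hleft, hscale.eventually_le_const (show _ < node j + 9 / 8 by linarith)]
    with y hy₁ hy₂ using quasimode_eq_add hy₁ hy₂

lemma contDiff_quasimode (B : ℕ) (κ : ℝ) : ContDiff ℝ 2 (quasimode B κ) := by
  refine contDiff_iff_contDiffAt.mpr fun w ↦ ?_
  obtain ⟨j, h₁, h₂⟩ : ∃ j, (j = 0 ∨ node j ≤ scale w.re) ∧ scale w.re < node (j + 1) := by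
    rcases lt_or_ge (scale w.re) 10 with hw | hw
    · exact ⟨0, .inl rfl, hw.trans_le (ten_le_node 1)⟩
    · exact (exists_node_le hw).imp fun _ ↦ And.imp_left .inr
  exact ((contDiff_blockWave B κ j).add
    (contDiff_blockWave B κ (j + 1))).contDiffAt.congr_of_eventuallyEq
      (quasimode_eventuallyEq h₁ h₂)

lemma periodic_quasimode (B : ℕ) (κ : ℝ) :
    Function.Periodic (quasimode B κ) (2 * Real.pi * Complex.I) :=
  fun w ↦ tsum_congr fun _ ↦ periodic_wave w

lemma quasimode_eq_blockWave_zero (h : scale w.re ≤ node 0) :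
    quasimode B κ w = blockWave B κ 0 w := by
  rw [quasimode_eq_add (j := 0) (.inl rfl) (by linarith), blockWave_eq_zero (i := 0 + 1), add_zero]
  exact amplitude_eq_zero_of_le_sub (by lia) (by rw [node_succ]; linarith)

lemma quasimode_eq_exp (h : scale w.re ≤ node 0) :
    quasimode B κ w = Complex.exp ((B * 100 : ℕ) * w) := by
  rw [quasimode_eq_blockWave_zero h, blockWave, wave, amplitude_zero_eq_one (by linarith),
    decay_zero_of_scale_le h, freq, modFreq, node]
  have hexponent : ((B * 100 : ℕ) * w : ℂ) = B * 100 * (w.re + w.im * Complex.I) := by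
    rw [Complex.re_add_im]
    push_cast
    rfl
  rw [hexponent, Complex.ofReal_one, one_mul]
  congr 1
  push_cast
  simp only [Complex.sin_zero, zero_mul, mul_zero]
  ring

lemma norm_logHelmholtz_add_le_of_dominant {f g : ℂ → ℂ} {K b : ℝ} (hK : 0 ≤ K)
    (hf : ContDiff ℝ 2 f) (hg : ContDiff ℝ 2 g) (hg_le : ‖g w‖ ≤ b) (hb : b ≤ ‖f w‖ / 2)
    (hLf : ‖logHelmholtz lam f w‖ ≤ K * ‖f w‖) (hLg : ‖logHelmholtz lam g w‖ ≤ K * b) :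
    ‖logHelmholtz lam (f + g) w‖ ≤ 3 * K * ‖f w + g w‖ := by
  have hdominant : ‖f w‖ / 2 ≤ ‖f w + g w‖ := by
    linarith [norm_sub_le_norm_add (f w) (g w)]
  calc ‖logHelmholtz lam (f + g) w‖ ≤ K * ‖f w‖ + K * b := by
        rw [logHelmholtz_add hf.contDiffAt hg.contDiffAt]
        exact (norm_add_le _ _).trans (add_le_add hLf hLg)
    _ ≤ K * (3 * (‖f w‖ / 2)) := by
        rw [← mul_add]
        gcongr
        linarith
    _ ≤ 3 * K * ‖f w + g w‖ := by
        rw [mul_left_comm, ← mul_assoc]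
        gcongr

lemma norm_blockWave_of_amplitude_eq_one {i : ℕ} (h : amplitude i w.re = 1) :
    ‖blockWave B κ i w‖ = Real.exp (-decay B κ i w.re) := by
  rw [norm_blockWave, h, abs_one, one_mul]

lemma exists_norm_logHelmholtz_quasimode_le (hκ : 0 < κ) (hκB : κ ≤ B) (hB : 4 ≤ B)
    (hκ_sq : κ ^ 2 = B ^ 2 - lam) :
    ∃ K, 0 ≤ K ∧ ∀ w, 10 ≤ scale w.re →
      ‖logHelmholtz lam (quasimode B κ) w‖ ≤ K * scale w.re ^ 3 * ‖quasimode B κ w‖ := by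
  obtain ⟨K₁, hK₁₀, hK₁⟩ := (isWaveFamily B κ).exists_norm_logHelmholtz_wave_le hκ_sq
  obtain ⟨K₂, hK₂₀, hK₂⟩ := exists_norm_logHelmholtz_overlap_le hκ.ne' hκ_sq
  refine ⟨3 * K₁ + K₂, by positivity, fun w hw ↦ ?_⟩
  obtain ⟨j, h₁, h₂⟩ := exists_node_le hw
  have hsucc := node_succ j
  have hcontDiff := contDiff_blockWave B κ
  have heq := quasimode_eventuallyEq (B := B) (κ := κ) (.inr h₁) h₂
  have hj := hK₁ j w (abs_le.mpr ⟨by linarith, by linarith⟩)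
  have hj' := hK₁ (j + 1) w (abs_le.mpr ⟨by linarith, by linarith⟩)
  rw [logHelmholtz_congr heq, heq.eq_of_nhds, Pi.add_apply, add_mul, add_mul]
  rcases le_or_gt (scale w.re) (node j + 1 / 4) with hleft | hleft
  · have hnorm := norm_blockWave_of_amplitude_eq_one (B := B) (κ := κ)
      (amplitude_eq_one (i := j) (t := w.re) (abs_le.mpr ⟨by linarith, by linarith⟩))
    refine le_add_of_le_of_nonneg ?_ (by positivity)
    rw [mul_assoc 3]
    exact norm_logHelmholtz_add_le_of_dominant (by positivity) (hcontDiff j) (hcontDiff (j + 1))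
      (norm_blockWave_le w) (hnorm ▸ exp_neg_decay_succ_le hκ hκB hB h₁ hleft) (hnorm ▸ hj) hj'
  rcases lt_or_ge (scale w.re) (node j + 3 / 4) with hright | hright
  · exact le_add_of_nonneg_of_le (by positivity) (hK₂ j w hleft hright)
  · have hnorm := norm_blockWave_of_amplitude_eq_one (B := B) (κ := κ)
      (amplitude_eq_one (i := j + 1) (t := w.re) (abs_le.mpr ⟨by linarith, by linarith⟩))
    refine le_add_of_le_of_nonneg ?_ (by positivity)
    rw [mul_assoc 3, add_comm (blockWave B κ j), add_comm (blockWave B κ j w)]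
    exact norm_logHelmholtz_add_le_of_dominant (by positivity) (hcontDiff (j + 1)) (hcontDiff j)
      (norm_blockWave_le w) (hnorm ▸ exp_neg_decay_le hκ hκB hB hright h₂.le) (hnorm ▸ hj') hj

lemma logHelmholtz_quasimode_of_lt (h : scale w.re < node 0) :
    logHelmholtz lam (quasimode B κ) w = lam * Real.exp (2 * w.re) * quasimode B κ w := by
  have hanalytic : AnalyticAt ℂ (fun w ↦ Complex.exp ((B * 100 : ℕ) * w)) w := by fun_prop
  have heq : quasimode B κ =ᶠ[𝓝 w] fun w ↦ Complex.exp ((B * 100 : ℕ) * w) := by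
    have hscale : ContinuousAt (fun y : ℂ ↦ scale y.re) w :=
      (contDiff_scale.continuous.comp Complex.continuous_re).continuousAt
    filter_upwards [hscale.eventually_lt_const h] with y hy using quasimode_eq_exp hy.le
  rw [logHelmholtz_congr heq, logHelmholtz, hanalytic.harmonicAt.2.eq_of_nhds, heq.eq_of_nhds,
    Pi.zero_apply, zero_add]

lemma exists_norm_logHelmholtz_quasimode_le_weight (hκ : 0 < κ) (hκB : κ ≤ B) (hB : 4 ≤ B)
    (hκ_sq : κ ^ 2 = B ^ 2 - lam) :
    ∃ K : ℝ, ∀ w, ‖logHelmholtz lam (quasimode B κ) w‖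
      ≤ K * Real.exp (2 * w.re) / (1 + Real.exp (w.re / 2)) * ‖quasimode B κ w‖ := by
  obtain ⟨K, hK₀, hK⟩ := exists_norm_logHelmholtz_quasimode_le hκ hκB hB hκ_sq
  refine ⟨11 * |lam| + 2 * K, fun w ↦ ?_⟩
  rw [← scale_pow_four, ← scale]
  have hs := scale_pos w.re
  rcases lt_or_ge (scale w.re) 10 with hw | hw
  · rw [logHelmholtz_quasimode_of_lt (hw.trans_le (ten_le_node 0)), ← scale_pow_four, norm_mul]
    gcongr
    rw [norm_mul, Complex.norm_real, Complex.norm_of_nonneg (by positivity), Real.norm_eq_abs,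
      le_div_iff₀ (by positivity)]
    calc |lam| * scale w.re ^ 4 * (1 + scale w.re) ≤ |lam| * scale w.re ^ 4 * 11 := by
          gcongr
          linarith
      _ ≤ (11 * |lam| + 2 * K) * scale w.re ^ 4 := by
          nlinarith [mul_nonneg hK₀ (pow_nonneg hs.le 4)]
  · refine (hK w hw).trans ?_
    gcongr
    rw [le_div_iff₀ (by positivity)]
    calc K * scale w.re ^ 3 * (1 + scale w.re) ≤ K * scale w.re ^ 3 * (2 * scale w.re) := by
          gcongr
          linarith
      _ ≤ (11 * |lam| + 2 * K) * scale w.re ^ 4 := by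
          nlinarith [mul_nonneg (abs_nonneg lam) (pow_nonneg hs.le 4)]

/-- The range of `t` in block `i`. -/
def block (i : ℕ) : Set ℝ := scale ⁻¹' Set.Icc (node i - 1) (node i + 1)

/-- The excess of the decay exponent over `κ |z|`, corrected by a multiple of `s` that makes it
increasing on each block. -/
def decayExcess (B : ℕ) (κ K : ℝ) (i : ℕ) (t : ℝ) : ℝ :=
  decay B κ i t - κ * Real.exp t + 2 * K * scale t

lemma exists_monotoneOn_decayExcess (B : ℕ) (κ : ℝ) :
    ∃ K, ∀ i, MonotoneOn (decayExcess B κ K i) (block i) := by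
  obtain ⟨K, -, hK⟩ := (isWaveFamily B κ).deriv_decay.exists_le
  refine ⟨K, fun i ↦ ?_⟩
  have hderiv (t : ℝ) : HasDerivAt (decayExcess B κ K i)
      (deriv (decay B κ i) t - κ * Real.exp t + 2 * K * (scale t / 2)) t :=
    ((hasDerivAt_deriv_of_contDiff_two (contDiff_decay B κ i) t).sub
      ((Real.hasDerivAt_exp t).const_mul κ)).add ((hasDerivAt_scale t).const_mul _)
  refine monotoneOn_of_deriv_nonneg
    (Set.ordConnected_Icc.preimage_mono strictMono_scale.monotone).convex
    (fun t _ ↦ (hderiv t).continuousAt.continuousWithinAt)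
    (fun t _ ↦ (hderiv t).differentiableAt.differentiableWithinAt) fun t ht ↦ ?_
  obtain ⟨h₁, h₂⟩ := interior_subset ht
  have hmem : |scale (t : ℂ).re - node i| ≤ 1 := by
    rw [Complex.ofReal_re, abs_le]
    constructor <;> linarith
  have h := (abs_le.mp (hK i t hmem)).1
  simp only [Complex.ofReal_re, zpow_one] at h
  rw [(hderiv t).deriv, ← scale_sq]
  linarith

lemma logNode_mem_block (i : ℕ) : logNode i ∈ block i := by
  simp [block, scale_logNode]

lemma crossing_mem_block (j : ℕ) : crossing j ∈ block j := by
  rw [block, Set.mem_preimage, scale_crossing]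
  constructor <;> linarith

lemma crossing_mem_block_succ (j : ℕ) : crossing j ∈ block (j + 1) := by
  rw [block, Set.mem_preimage, scale_crossing, node_succ]
  constructor <;> linarith

lemma logNode_le_crossing (j : ℕ) : logNode j ≤ crossing j :=
  logNode_le (by rw [scale_crossing]; linarith)

lemma crossing_le_logNode_succ (j : ℕ) : crossing j ≤ logNode (j + 1) :=
  strictMono_scale.le_iff_le.mp (by rw [scale_logNode, scale_crossing, node_succ]; linarith)

lemma decayExcess_crossing {K : ℝ} (j : ℕ) :
    decayExcess B κ K j (crossing j) = decayExcess B κ K (j + 1) (crossing j) := by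
  rw [decayExcess, decayExcess, decay_succ_crossing]

lemma decayExcess_zero_le {K : ℝ}
    (h : ∀ i, MonotoneOn (decayExcess B κ K i) (block i)) (i : ℕ) :
    decayExcess B κ K 0 (logNode 0) ≤ decayExcess B κ K i (logNode i) := by
  induction i with
  | zero => rfl
  | succ j ih =>
    calc decayExcess B κ K 0 (logNode 0) ≤ decayExcess B κ K j (logNode j) := ih
      _ ≤ decayExcess B κ K j (crossing j) :=
        h j (logNode_mem_block j) (crossing_mem_block j) (logNode_le_crossing j)
      _ = decayExcess B κ K (j + 1) (crossing j) := decayExcess_crossing j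
      _ ≤ decayExcess B κ K (j + 1) (logNode (j + 1)) :=
        h (j + 1) (crossing_mem_block_succ j) (logNode_mem_block _) (crossing_le_logNode_succ j)

lemma decayExcess_zero_le_of_mem {K : ℝ} (hκ : 0 < κ)
    (h : ∀ i, MonotoneOn (decayExcess B κ K i) (block i))
    (h₁ : node j ≤ scale t) (h₂ : scale t ≤ node (j + 1)) :
    decayExcess B κ K 0 (logNode 0) ≤ decayExcess B κ K j t ∧
      decayExcess B κ K 0 (logNode 0) ≤ decayExcess B κ K (j + 1) t := by
  have hsucc := node_succ j
  have hbase := decayExcess_zero_le h j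
  have hj : decayExcess B κ K 0 (logNode 0) ≤ decayExcess B κ K j t :=
    hbase.trans <| h j (logNode_mem_block j) ⟨by linarith, by linarith⟩ (logNode_le h₁)
  refine ⟨hj, ?_⟩
  rcases le_total t (crossing j) with ht | ht
  · have hgap := mul_nonneg (rateGap_nonneg (B := B) hκ j) (sub_nonneg.mpr ht)
    have hdecay := rateGap_mul_le_decay_sub (B := B) hκ h₁ h₂
    refine hj.trans ?_
    rw [decayExcess, decayExcess]
    linarith
  · calc decayExcess B κ K 0 (logNode 0) ≤ decayExcess B κ K j (logNode j) := hbase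
      _ ≤ decayExcess B κ K j (crossing j) :=
        h j (logNode_mem_block j) (crossing_mem_block j) (logNode_le_crossing j)
      _ = decayExcess B κ K (j + 1) (crossing j) := decayExcess_crossing j
      _ ≤ decayExcess B κ K (j + 1) t :=
        h (j + 1) (crossing_mem_block_succ j) ⟨by linarith, by linarith⟩ ht

lemma exists_le_decay (hκ : 0 < κ) : ∃ C, ∀ j t, node j ≤ scale t → scale t ≤ node (j + 1) →
    κ / 2 * Real.exp t - C ≤ decay B κ j t ∧ κ / 2 * Real.exp t - C ≤ decay B κ (j + 1) t := by
  obtain ⟨K, hK⟩ := exists_monotoneOn_decayExcess B κ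
  refine ⟨2 * K ^ 2 / κ - decayExcess B κ K 0 (logNode 0), fun j t h₁ h₂ ↦ ?_⟩
  have hyoung : 2 * K * scale t ≤ κ / 2 * Real.exp t + 2 * K ^ 2 / κ := by
    rw [← scale_sq, ← sub_nonneg]
    calc 0 ≤ (κ * scale t - 2 * K) ^ 2 / (2 * κ) := by positivity
      _ = _ := by
        field_simp
        ring
  obtain ⟨hj, hj'⟩ := decayExcess_zero_le_of_mem hκ hK h₁ h₂
  rw [decayExcess.eq_def B κ K j] at hj
  rw [decayExcess.eq_def B κ K (j + 1)] at hj'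
  constructor <;> linarith

lemma exists_norm_quasimode_le (hκ : 0 < κ) :
    ∃ C, ∀ w, ‖quasimode B κ w‖ ≤ C * Real.exp (-(κ / 2 * Real.exp w.re)) := by
  obtain ⟨C, hC⟩ := exists_le_decay (B := B) hκ
  have hexp {i : ℕ} {t : ℝ} (h : κ / 2 * Real.exp t - C ≤ decay B κ i t) :
      Real.exp (-decay B κ i t) ≤ Real.exp C * Real.exp (-(κ / 2 * Real.exp t)) := by
    rw [← Real.exp_add]
    gcongr
    linarith
  refine ⟨2 * Real.exp C, fun w ↦ ?_⟩
  rcases lt_or_ge (scale w.re) 10 with hw | hw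
  · have hw₀ : scale w.re ≤ node 0 := hw.le.trans (ten_le_node 0)
    have hlog : w.re ≤ logNode 0 := strictMono_scale.le_iff_le.mp (by rwa [scale_logNode])
    have hdecay : decay B κ 0 (logNode 0) ≤ decay B κ 0 w.re := by
      rw [decay_zero_of_scale_le (scale_logNode 0).le, decay_zero_of_scale_le hw₀]
      exact mul_le_mul_of_nonpos_left hlog (neg_nonpos.mpr (by positivity))
    have hcentre := (hC 0 (logNode 0) (scale_logNode 0).ge
      (by rw [scale_logNode, node_succ]; linarith)).1
    rw [quasimode_eq_blockWave_zero hw₀]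
    have hlocal : ‖blockWave B κ 0 w‖ ≤ Real.exp C * Real.exp (-(κ / 2 * Real.exp w.re)) := by
      refine (norm_blockWave_le w).trans (hexp ?_)
      refine le_trans ?_ (hcentre.trans hdecay)
      gcongr
    rw [two_mul, add_mul]
    exact le_add_of_le_of_nonneg hlocal (by positivity)
  · obtain ⟨j, h₁, h₂⟩ := exists_node_le hw
    obtain ⟨hj, hj'⟩ := hC j w.re h₁ h₂.le
    rw [(quasimode_eventuallyEq (.inr h₁) h₂).eq_of_nhds, two_mul, add_mul]
    exact (norm_add_le _ _).trans (add_le_add ((norm_blockWave_le w).trans (hexp hj))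
      ((norm_blockWave_le w).trans (hexp hj')))

theorem isDecayingQuasimode_quasimode (hκ : 0 < κ) (hκB : κ ≤ B) (hB : 4 ≤ B)
    (hκ_sq : κ ^ 2 = B ^ 2 - lam) : IsDecayingQuasimode lam (ofLogCoordinate (quasimode B κ)) := by
  obtain ⟨K, hK⟩ := exists_norm_logHelmholtz_quasimode_le_weight hκ hκB hB hκ_sq
  obtain ⟨C, hC⟩ := exists_norm_quasimode_le (B := B) hκ
  refine isDecayingQuasimode_ofLogCoordinate (m := B * 100) (T := logNode 0)
    (periodic_quasimode B κ) (by lia) (half_pos hκ) (contDiff_quasimode B κ) (fun w hw ↦ ?_) hK hC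
  exact quasimode_eq_exp ((strictMono_scale hw).le.trans_eq (scale_logNode 0))

end Quasimode

lemma exists_isDecayingQuasimode_of_nonneg {lam : ℝ} (hlam : 0 ≤ lam) :
    ∃ u, IsDecayingQuasimode lam u := by
  obtain ⟨n, hn⟩ := exists_nat_gt lam
  have hlt : lam < ((n + 4 : ℕ) : ℝ) ^ 2 := by
    push_cast
    nlinarith
  refine ⟨_, isDecayingQuasimode_quasimode (B := n + 4) (κ := √(((n + 4 : ℕ) : ℝ) ^ 2 - lam))
    (Real.sqrt_pos.mpr (sub_pos.mpr hlt)) ?_ (by lia) (Real.sq_sqrt (sub_pos.mpr hlt).le)⟩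
  exact Real.sqrt_le_iff.mpr ⟨by positivity, by linarith⟩

theorem exists_isDecayingQuasimode (lam : ℂ) : ∃ u, IsDecayingQuasimode lam u := by
  obtain ⟨k, hk⟩ := IsAlgClosed.exists_pow_nat_eq (-lam) two_pos
  obtain rfl : -k ^ 2 = lam := by rw [hk, neg_neg]
  rcases lt_trichotomy k.re 0 with hre | hre | hre
  · rw [← neg_sq k]
    exact ⟨_, isDecayingQuasimode_cexp_neg_mul_sqrt (by simpa using hre)⟩
  · have hreal : -k ^ 2 = (k.im ^ 2 : ℝ) := by
      apply Complex.ext <;> simp [sq, hre]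
    rw [hreal]
    exact exists_isDecayingQuasimode_of_nonneg (sq_nonneg _)
  · exact ⟨_, isDecayingQuasimode_cexp_neg_mul_sqrt hre⟩

lemma mul_rpow_sqrt_le {C : ℝ} (hC : 0 ≤ C) (r : ℝ) :
    C * √(1 + r ^ 2) ^ (-(1 / 2 : ℝ)) ≤ 2 * C := by
  have hbracket : √(1 + r ^ 2) ^ (-(1 / 2 : ℝ)) ≤ 1 :=
    Real.rpow_le_one_of_one_le_of_nonpos (Real.one_le_sqrt.mpr (by nlinarith)) (by norm_num)
  linarith [mul_le_of_le_one_right hC hbracket]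

lemma mul_rpow_sqrt_le_log_mul {C r : ℝ} (hC : 0 ≤ C) (hr : 2 ≤ r) :
    C * √(1 + r ^ 2) ^ (-(1 / 2 : ℝ)) ≤ 2 * C * Real.log r * √(1 + r ^ 2) ^ (-(1 / 2 : ℝ)) := by
  have hlog : 1 ≤ 2 * Real.log r := by
    linarith [Real.log_two_gt_d9, Real.log_le_log two_pos hr]
  gcongr
  linarith [mul_le_mul_of_nonneg_left hlog hC]

theorem stmt0_general (lam : ℂ) :
    ∃ (C c : ℝ) (V u : EuclideanSpace ℝ (Fin 2) → ℂ),
      0 < C ∧ 0 < c ∧ u ≠ 0 ∧ ContDiff ℝ 2 u ∧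
      (∀ x, lap u x + lam * u x = V x * u x) ∧
      (∀ x, ‖V x‖ ≤ C * Real.sqrt (1 + ‖x‖ ^ 2) ^ (-(1 / 2 : ℝ))) ∧
      (∀ x, ‖u x‖ ≤ C * Real.exp (-(c * ‖x‖))) :=
  (exists_isDecayingQuasimode lam).elim fun _ hu ↦ hu.exists_potential

theorem stmt0 (lam : ℂ) :
    ∃ (C c : ℝ) (V u : EuclideanSpace ℝ (Fin 2) → ℂ),
      0 < C ∧ 0 < c ∧ u ≠ 0 ∧ ContDiff ℝ 2 u ∧
      (∀ x, lap u x + lam * u x = V x * u x) ∧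
      (∀ x, 2 ≤ ‖x‖ →
        ‖V x‖ ≤ C * Real.log ‖x‖ * Real.sqrt (1 + ‖x‖ ^ 2) ^ (-(1 / 2 : ℝ))) ∧
      (∀ x, ‖x‖ < 2 → ‖V x‖ ≤ C) ∧
      (∀ x, ‖u x‖ ≤ C * Real.exp (-(c * ‖x‖))) := by
  obtain ⟨C, c, V, u, hC, hc, hu, hu₂, heq, hV, hdecay⟩ := stmt0_general lam
  exact ⟨2 * C, c, V, u, by positivity, hc, hu, hu₂, heq,
    fun x hx ↦ (hV x).trans (mul_rpow_sqrt_le_log_mul hC.le hx),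
    fun x _ ↦ (hV x).trans (mul_rpow_sqrt_le hC.le ‖x‖),
    fun x ↦ (hdecay x).trans (by gcongr; linarith)⟩
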